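/- arXiv:2101.02537 — 13 statements merged into one kernel-verified Lean document; each statement's English description precedes it below -/
import Mathlib

section
/- For any finite simple graph G without isolated vertices, γ_t(G) ≤ γ_{t{R2}}(G) ≤ γ_{tR}(G) ≤ 2γ_t(G), where γ_t(G) is the total domination number, γ_{t{R2}}(G) is the total Roman {2}-domination number, and γ_{tR}(G) is the total Roman domination number of G. -/
/-!
Each inequality turns an optimal object of one kind into an object of the other kind. The support
of a total Roman {2}-dominating function is a total dominating set of no larger size. A total Roman
dominating function is total Roman {2}-dominating, since one neighbor of value 2 already gives
neighborhood sum at least 2. Twice the indicator of a total dominating set is a total Roman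
dominating function. As the parameters are infima in `ℕ`, where `sInf ∅ = 0`, the feasible sets
must also be nonempty; without isolated vertices the whole vertex set is total dominating, and the
constructions carry this over to functions.
-/

open Finset
open scoped Classical

variable {V : Type*}

/-- `f` is a total Roman {2}-dominating function on `G`. -/
def IsTR2DF [Fintype V] (G : SimpleGraph V) (f : V → ℕ) : Prop :=
  (∀ v, f v ≤ 2) ∧
  (∀ v, f v = 0 → 2 ≤ ∑ u ∈ Finset.univ.filter (fun u => G.Adj v u), f u) ∧
  (∀ v, 1 ≤ f v → ∃ u, G.Adj v u ∧ 1 ≤ f u)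

/-- The total Roman {2}-domination number of `G`. -/
noncomputable def tR2Num [Fintype V] (G : SimpleGraph V) : ℕ :=
  sInf {k | ∃ f : V → ℕ, IsTR2DF G f ∧ (∑ v, f v) = k}

/-- `f` is a total Roman dominating function on `G`. -/
def IsTRDF [Fintype V] (G : SimpleGraph V) (f : V → ℕ) : Prop :=
  (∀ v, f v ≤ 2) ∧
  (∀ v, f v = 0 → ∃ u, G.Adj v u ∧ f u = 2) ∧
  (∀ v, 1 ≤ f v → ∃ u, G.Adj v u ∧ 1 ≤ f u)

/-- The total Roman domination number of `G`. -/
noncomputable def tRNum [Fintype V] (G : SimpleGraph V) : ℕ :=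
  sInf {k | ∃ f : V → ℕ, IsTRDF G f ∧ (∑ v, f v) = k}

/-- `f` is a Roman {2}-dominating function on `G`. -/
def IsR2DF [Fintype V] (G : SimpleGraph V) (f : V → ℕ) : Prop :=
  (∀ v, f v ≤ 2) ∧
  (∀ v, f v = 0 → 2 ≤ ∑ u ∈ Finset.univ.filter (fun u => G.Adj v u), f u)

/-- The Roman {2}-domination number of `G`. -/
noncomputable def r2Num [Fintype V] (G : SimpleGraph V) : ℕ :=
  sInf {k | ∃ f : V → ℕ, IsR2DF G f ∧ (∑ v, f v) = k}

/-- The total domination number of `G`. -/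
noncomputable def totalDomNum [Fintype V] (G : SimpleGraph V) : ℕ :=
  sInf {k | ∃ S : Finset V, (∀ v : V, ∃ u ∈ S, G.Adj v u) ∧ S.card = k}

/-- The domination number of `G`. -/
noncomputable def domNum [Fintype V] (G : SimpleGraph V) : ℕ :=
  sInf {k | ∃ S : Finset V, (∀ v : V, v ∉ S → ∃ u ∈ S, G.Adj v u) ∧ S.card = k}

/-- The double domination number of `G`. -/
noncomputable def doubleDomNum [Fintype V] (G : SimpleGraph V) : ℕ :=
  sInf {k | ∃ S : Finset V,
    (∀ v : V, 2 ≤ (S.filter (fun u => G.Adj v u ∨ u = v)).card) ∧ S.card = k}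

theorem IsTRDF.isTR2DF {V : Type*} [Fintype V] {G : SimpleGraph V} {f : V → ℕ}
    (hf : IsTRDF G f) : IsTR2DF G f := by
  refine ⟨hf.1, fun v hv => ?_, hf.2.2⟩
  obtain ⟨u, hu, hu2⟩ := hf.2.1 v hv
  rw [← hu2]
  exact Finset.single_le_sum (f := f) (fun _ _ => Nat.zero_le _) (by simp [hu])

/-- Every vertex, whatever its value, has a neighbor in the support of a total Roman
{2}-dominating function. -/
theorem IsTR2DF.exists_adj_pos {V : Type*} [Fintype V] {G : SimpleGraph V} {f : V → ℕ}
    (hf : IsTR2DF G f) (v : V) : ∃ u, G.Adj v u ∧ 1 ≤ f u := by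
  by_cases hv : f v = 0
  · by_contra! hc
    have h2 := hf.2.1 v hv
    rw [Finset.sum_eq_zero] at h2
    · omega
    · intro u hu
      have := hc u (by simpa using hu)
      omega
  · exact hf.2.2 v (by omega)

theorem card_support_le_sum {V : Type*} [Fintype V] (f : V → ℕ) :
    (Finset.univ.filter (fun v => 1 ≤ f v)).card ≤ ∑ v, f v := by
  rw [Finset.card_filter]
  refine Finset.sum_le_sum fun v _ => ?_
  split_ifs <;> omega

theorem isTRDF_two_indicator {V : Type*} [Fintype V] {G : SimpleGraph V} {S : Finset V}
    (hS : ∀ v : V, ∃ u ∈ S, G.Adj v u) : IsTRDF G (fun v => if v ∈ S then 2 else 0) := by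
  refine ⟨fun v => ?_, fun v _ => ?_, fun v _ => ?_⟩
  · dsimp only
    split_ifs <;> omega
  · obtain ⟨u, hu, huv⟩ := hS v
    exact ⟨u, huv, by simp [hu]⟩
  · obtain ⟨u, hu, huv⟩ := hS v
    exact ⟨u, huv, by simp [hu]⟩

theorem statement_0 {V : Type*} [Fintype V] (G : SimpleGraph V)
    (h : ∀ v : V, ∃ u, G.Adj v u) :
    totalDomNum G ≤ tR2Num G ∧ tR2Num G ≤ tRNum G ∧ tRNum G ≤ 2 * totalDomNum G := by
  have hT : {k | ∃ S : Finset V, (∀ v : V, ∃ u ∈ S, G.Adj v u) ∧ S.card = k}.Nonempty :=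
    ⟨_, Finset.univ, fun v => by simpa using h v, rfl⟩
  obtain ⟨S, hS, hScard⟩ := Nat.sInf_mem hT
  have hR : {k | ∃ f : V → ℕ, IsTRDF G f ∧ (∑ v, f v) = k}.Nonempty :=
    ⟨_, _, isTRDF_two_indicator hS, rfl⟩
  obtain ⟨g, hg, hgsum⟩ := Nat.sInf_mem hR
  have hR2 : {k | ∃ f : V → ℕ, IsTR2DF G f ∧ (∑ v, f v) = k}.Nonempty :=
    ⟨_, g, hg.isTR2DF, rfl⟩
  obtain ⟨f, hf, hfsum⟩ := Nat.sInf_mem hR2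
  refine ⟨?_, ?_, ?_⟩
  · refine le_trans (Nat.sInf_le ⟨Finset.univ.filter (fun v => 1 ≤ f v), fun v => ?_, rfl⟩)
      ((card_support_le_sum f).trans_eq hfsum)
    obtain ⟨u, huv, hu⟩ := hf.exists_adj_pos v
    exact ⟨u, by simpa using hu, huv⟩
  · exact Nat.sInf_le ⟨g, hg.isTR2DF, hgsum⟩
  · refine Nat.sInf_le ⟨_, isTRDF_two_indicator hS, ?_⟩
    rw [totalDomNum, ← hScard]
    simp [Finset.sum_ite_mem, mul_comm]
end

section
/- For any finite simple graph G without isolated vertices, γ_{t{R2}}(G) = γ_t(G) holds if and only if γ_{×2}(G) = γ_t(G), where γ_{t{R2}}(G) is the total Roman {2}-domination number, γ_t(G) is the total domination number, and γ_{×2}(G) is the double domination number of G. -/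
/-!
The inequalities `γ_t ≤ γ_{t{R2}} ≤ γ_{×2}` hold in general: the support of a TR2DF is a total
dominating set of at most the same weight, and the indicator function of a double dominating set
is a TR2DF. This gives the implication from right to left. Conversely, if an optimal TR2DF `f` has
weight `γ_t`, its support is a total dominating set, so it has at least `γ_t` elements. Hence `f`
never takes the value `2`, and a `{0,1}`-valued TR2DF is the indicator function of a double
dominating set.
-/

open Finset
open scoped Classical

variable {V : Type*}

/-- The set of vertices on which `f` is nonzero. -/
noncomputable def posSupport {V : Type*} [Fintype V] (f : V → ℕ) : Finset V :=
  Finset.univ.filter (fun v => 1 ≤ f v)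

lemma card_posSupport_le {V : Type*} [Fintype V] (f : V → ℕ) :
    (posSupport f).card ≤ ∑ v, f v := by
  rw [posSupport, Finset.card_filter]
  refine Finset.sum_le_sum fun v _ => ?_
  split_ifs <;> omega

lemma IsTR2DF.posSupport_total {V : Type*} [Fintype V] {G : SimpleGraph V} {f : V → ℕ}
    (hf : IsTR2DF G f) (v : V) : ∃ u ∈ posSupport f, G.Adj v u := by
  obtain ⟨-, h0, h1⟩ := hf
  by_cases hv : f v = 0
  · have hs := h0 v hv
    obtain ⟨u, hu, hne⟩ := Finset.exists_ne_zero_of_sum_ne_zero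
      (show ∑ u ∈ Finset.univ.filter (fun u => G.Adj v u), f u ≠ 0 by omega)
    refine ⟨u, ?_, (Finset.mem_filter.1 hu).2⟩
    simp only [posSupport, Finset.mem_filter, Finset.mem_univ, true_and]
    omega
  · obtain ⟨u, hu, hfu⟩ := h1 v (by omega)
    exact ⟨u, by simpa [posSupport] using hfu, hu⟩

lemma totalDomNum_le {V : Type*} [Fintype V] {G : SimpleGraph V} {S : Finset V}
    (hS : ∀ v : V, ∃ u ∈ S, G.Adj v u) : totalDomNum G ≤ S.card :=
  Nat.sInf_le ⟨S, hS, rfl⟩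

/-- The minimum defining `γ_{t{R2}}` is attained: without isolated vertices, the constant
function `1` is a TR2DF, so the set of weights is nonempty. -/
lemma exists_tR2 {V : Type*} [Fintype V] (G : SimpleGraph V) (h : ∀ v : V, ∃ u, G.Adj v u) :
    ∃ f : V → ℕ, IsTR2DF G f ∧ (∑ v, f v) = tR2Num G := by
  refine Nat.sInf_mem (s := {k | ∃ f : V → ℕ, IsTR2DF G f ∧ (∑ v, f v) = k})
    ⟨_, fun _ => 1, ⟨by simp, by simp, fun v _ => ?_⟩, rfl⟩
  obtain ⟨u, hu⟩ := h v
  exact ⟨u, hu, le_rfl⟩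

lemma two_le_closedNbr {V : Type*} {G : SimpleGraph V} {S : Finset V} {u v : V}
    (hv : v ∈ S) (hu : u ∈ S) (huv : G.Adj v u) :
    2 ≤ (S.filter (fun u => G.Adj v u ∨ u = v)).card :=
  Finset.one_lt_card.2 ⟨v, by simp [hv], u, by simp [hu, huv], huv.ne⟩

/-- The minimum defining `γ_{×2}` is attained: without isolated vertices, the whole vertex set
is double dominating. -/
lemma exists_doubleDom {V : Type*} [Fintype V] (G : SimpleGraph V)
    (h : ∀ v : V, ∃ u, G.Adj v u) :
    ∃ S : Finset V, (∀ v : V, 2 ≤ (S.filter (fun u => G.Adj v u ∨ u = v)).card) ∧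
      S.card = doubleDomNum G := by
  refine Nat.sInf_mem (s := {k | ∃ S : Finset V,
    (∀ v : V, 2 ≤ (S.filter (fun u => G.Adj v u ∨ u = v)).card) ∧ S.card = k})
    ⟨_, Finset.univ, fun v => ?_, rfl⟩
  obtain ⟨u, hu⟩ := h v
  exact two_le_closedNbr (Finset.mem_univ v) (Finset.mem_univ u) hu

lemma totalDomNum_le_tR2Num {V : Type*} [Fintype V] (G : SimpleGraph V)
    (h : ∀ v : V, ∃ u, G.Adj v u) : totalDomNum G ≤ tR2Num G := by
  obtain ⟨f, hf, hw⟩ := exists_tR2 G h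
  exact hw ▸ (totalDomNum_le hf.posSupport_total).trans (card_posSupport_le f)

/-- The indicator function of a double dominating set is a TR2DF. -/
lemma isTR2DF_indicator {V : Type*} [Fintype V] {G : SimpleGraph V} {S : Finset V}
    (hS : ∀ v : V, 2 ≤ (S.filter (fun u => G.Adj v u ∨ u = v)).card) :
    IsTR2DF G (fun v => if v ∈ S then 1 else 0) := by
  refine ⟨fun v => by dsimp only; split_ifs <;> omega, fun v hv => ?_, fun v _ => ?_⟩
  · have hvS : v ∉ S := by simpa using hv
    rw [← Finset.card_filter, Finset.filter_filter]
    refine (hS v).trans (Finset.card_le_card fun u hu => ?_)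
    simp only [Finset.mem_filter, Finset.mem_univ, true_and] at hu ⊢
    obtain ⟨huS, hu | rfl⟩ := hu
    · exact ⟨hu, huS⟩
    · exact absurd huS hvS
  · obtain ⟨u, hu, huv⟩ := Finset.exists_mem_ne (hS v) v
    simp only [Finset.mem_filter] at hu
    exact ⟨u, hu.2.resolve_right huv, by simp [hu.1]⟩

lemma tR2Num_le_doubleDomNum {V : Type*} [Fintype V] (G : SimpleGraph V)
    (h : ∀ v : V, ∃ u, G.Adj v u) : tR2Num G ≤ doubleDomNum G := by
  obtain ⟨S, hS, hc⟩ := exists_doubleDom G h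
  exact Nat.sInf_le ⟨_, isTR2DF_indicator hS, by simp [← hc]⟩

/-- The support of a TR2DF without the value `2` is a double dominating set. -/
lemma IsTR2DF.posSupport_double {V : Type*} [Fintype V] {G : SimpleGraph V} {f : V → ℕ}
    (hf : IsTR2DF G f) (h1 : ∀ v, f v ≤ 1) (v : V) :
    2 ≤ ((posSupport f).filter (fun u => G.Adj v u ∨ u = v)).card := by
  by_cases hv : f v = 0
  · refine (hf.2.1 v hv).trans ?_
    calc ∑ u ∈ Finset.univ.filter (fun u => G.Adj v u), f u
        ≤ ∑ u ∈ Finset.univ.filter (fun u => G.Adj v u), if 1 ≤ f u then 1 else 0 := by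
          refine Finset.sum_le_sum fun u _ => ?_
          have := h1 u
          split_ifs <;> omega
      _ = ((Finset.univ.filter (fun u => G.Adj v u)).filter (fun u => 1 ≤ f u)).card :=
          (Finset.card_filter _ _).symm
      _ ≤ _ := by
          refine Finset.card_le_card fun u hu => ?_
          simp only [posSupport, Finset.mem_filter, Finset.mem_univ, true_and] at hu ⊢
          exact ⟨hu.2, Or.inl hu.1⟩
  · obtain ⟨u, hu, huv⟩ := hf.posSupport_total v
    refine two_le_closedNbr ?_ hu huv
    simp only [posSupport, Finset.mem_filter, Finset.mem_univ, true_and]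
    omega

theorem statement_2 {V : Type*} [Fintype V] (G : SimpleGraph V)
    (h : ∀ v : V, ∃ u, G.Adj v u) :
    tR2Num G = totalDomNum G ↔ doubleDomNum G = totalDomNum G := by
  have hle := totalDomNum_le_tR2Num G h
  have hle' := tR2Num_le_doubleDomNum G h
  refine ⟨fun heq => ?_, fun heq => by omega⟩
  obtain ⟨f, hf, hw⟩ := exists_tR2 G h
  have hcard := card_posSupport_le f
  have htot := totalDomNum_le hf.posSupport_total
  have h1 : ∀ v, f v ≤ 1 := by
    by_contra! hcon
    obtain ⟨v, hv⟩ := hcon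
    -- A value `2` would make the support strictly smaller than the weight `γ_t`.
    have hlt : (posSupport f).card < ∑ v, f v := by
      rw [posSupport, Finset.card_filter]
      refine Finset.sum_lt_sum (fun u _ => ?_) ⟨v, Finset.mem_univ v, ?_⟩
      · split_ifs <;> omega
      · split_ifs <;> omega
    omega
  have hdd : doubleDomNum G ≤ (posSupport f).card :=
    Nat.sInf_le ⟨_, hf.posSupport_double h1, rfl⟩
  omega
end

section
/- For any finite simple graph G without isolated vertices, γ_{t{R2}}(G) ≤ γ_t(G) + γ(G), where γ_{t{R2}}(G) is the total Roman {2}-domination number, γ_t(G) is the total domination number, and γ(G) is the domination number of G. -/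
/-!
Take a minimum total dominating set `S` and a minimum dominating set `D`, and let `f` be the sum of
their indicator functions, of weight `γ_t(G) + γ(G)`. Every vertex has a neighbour in `S`, where `f`
is positive. A vertex with `f v = 0` lies outside `D`, so both `S` and `D` meet its neighbourhood,
and the two indicators contribute at least `1` each to the neighbourhood sum.
-/

open Finset
open scoped Classical

variable {V : Type*}

theorem statement_3 {V : Type*} [Fintype V] (G : SimpleGraph V)
    (h : ∀ v : V, ∃ u, G.Adj v u) :
    tR2Num G ≤ totalDomNum G + domNum G := by
  -- Absence of isolated vertices makes `univ` a total dominating set, so neither infimum is over `∅`.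
  obtain ⟨S, hS, hSc⟩ : totalDomNum G ∈
      {k | ∃ S : Finset V, (∀ v : V, ∃ u ∈ S, G.Adj v u) ∧ S.card = k} :=
    Nat.sInf_mem ⟨_, Finset.univ, fun v => by simpa using h v, rfl⟩
  obtain ⟨D, hD, hDc⟩ : domNum G ∈
      {k | ∃ S : Finset V, (∀ v : V, v ∉ S → ∃ u ∈ S, G.Adj v u) ∧ S.card = k} :=
    Nat.sInf_mem ⟨_, Finset.univ, fun v hv => absurd (Finset.mem_univ v) hv, rfl⟩
  refine Nat.sInf_le
    ⟨fun v => (if v ∈ S then 1 else 0) + (if v ∈ D then 1 else 0), ⟨?_, ?_, ?_⟩, ?_⟩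
  · intro v
    dsimp only
    split_ifs <;> omega
  · intro v hv
    have hvD : v ∉ D := by
      intro hmem
      simp [hmem] at hv
    obtain ⟨s, hs, hvs⟩ := hS v
    obtain ⟨d, hd, hvd⟩ := hD v hvD
    have one_le : ∀ (T : Finset V) (t : V), t ∈ T → G.Adj v t →
        1 ≤ ∑ u ∈ Finset.univ.filter (fun u => G.Adj v u), (if u ∈ T then 1 else 0) := by
      intro T t ht hvt
      calc 1 = (if t ∈ T then 1 else 0) := by simp [ht]
        _ ≤ _ := Finset.single_le_sum (f := fun u => if u ∈ T then 1 else 0)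
            (fun _ _ => Nat.zero_le _) (by simpa using hvt)
    rw [Finset.sum_add_distrib]
    exact Nat.add_le_add (one_le S s hs hvs) (one_le D d hd hvd)
  · intro v _
    obtain ⟨s, hs, hvs⟩ := hS v
    exact ⟨s, hvs, by simp [hs]⟩
  · rw [Finset.sum_add_distrib, ← hSc, ← hDc]
    simp
end

section
/- For any finite simple graph G without isolated vertices, γ_{t{R2}}(G) ≤ 3γ(G), where γ_{t{R2}}(G) is the total Roman {2}-domination number and γ(G) is the domination number of G. -/
/-!
Take a minimum dominating set `S` and pick a neighbour `g v` of every vertex `v`. Give weight 2 to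
the vertices of `S`, weight 1 to those of `g(S)` outside `S`, and 0 to the rest. Each vertex
outside `S` has a neighbour of weight 2, each vertex `v` of `S` has the neighbour `g v` of positive
weight, and the total weight is at most `2|S| + |g(S)| ≤ 3|S|`.
-/

open Finset
open scoped Classical

variable {V : Type*}

theorem statement_4 {V : Type*} [Fintype V] (G : SimpleGraph V)
    (h : ∀ v : V, ∃ u, G.Adj v u) :
    tR2Num G ≤ 3 * domNum G := by
  choose g hg using h
  obtain ⟨S, hS, hcard⟩ : domNum G ∈ {k | ∃ S : Finset V,
      (∀ v : V, v ∉ S → ∃ u ∈ S, G.Adj v u) ∧ S.card = k} :=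
    Nat.sInf_mem ⟨_, Finset.univ, fun v hv => absurd (Finset.mem_univ v) hv, rfl⟩
  rw [← hcard]
  let f : V → ℕ := fun v => if v ∈ S then 2 else if v ∈ S.image g then 1 else 0
  have hf2 : ∀ v ∈ S, f v = 2 := fun v hv => if_pos hv
  have hfg : ∀ v ∈ S, 1 ≤ f (g v) := by
    intro v hv
    have hm : g v ∈ S.image g := Finset.mem_image_of_mem g hv
    simp only [f, if_pos hm]
    split_ifs <;> omega
  have hf : IsTR2DF G f := by
    refine ⟨fun v => ?_, fun v hv => ?_, fun v _ => ?_⟩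
    · simp only [f]
      split_ifs <;> omega
    · have hvS : v ∉ S := fun hmem => by simp [hf2 v hmem] at hv
      obtain ⟨u, hu, huv⟩ := hS v hvS
      rw [← hf2 u hu]
      exact Finset.single_le_sum (f := f) (fun _ _ => Nat.zero_le _) (by simpa using huv)
    · by_cases hvS : v ∈ S
      · exact ⟨g v, hg v, hfg v hvS⟩
      · obtain ⟨u, hu, huv⟩ := hS v hvS
        exact ⟨u, huv, by simp [hf2 u hu]⟩
  have hweight : ∑ v, f v ≤ 3 * S.card := by
    calc ∑ v, f v
        ≤ ∑ v, ((if v ∈ S then 2 else 0) + (if v ∈ S.image g then 1 else 0)) := by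
          refine Finset.sum_le_sum fun v _ => ?_
          simp only [f]
          split_ifs <;> omega
      _ = S.card * 2 + (S.image g).card := by
          rw [Finset.sum_add_distrib, Finset.sum_ite_mem, Finset.sum_ite_mem]
          simp only [Finset.univ_inter, Finset.sum_const, smul_eq_mul, mul_one]
      _ ≤ 3 * S.card := by
          have := Finset.card_image_le (s := S) (f := g)
          omega
  exact le_trans (Nat.sInf_le ⟨f, hf, rfl⟩) hweight
end

section
/- For any finite simple graph G without isolated vertices, γ_{t{R2}}(G) ≤ γ_{R2}(G) + γ(G), where γ_{t{R2}}(G) is the total Roman {2}-domination number, γ_{R2}(G) is the Roman {2}-domination number, and γ(G) is the domination number of G. -/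
/-!
Take a minimum R2DF `f` and a minimum dominating set `D`. Let `W` be the image of `D` under the map
fixing each `v` with `f v = 0` and sending every other `v` to a chosen neighbour, so that
`|W| ≤ |D|`, and let `g` be the pointwise maximum of `f` and the indicator of `W`. Then `g` has
weight at most `w(f) + |D|`, and it is a TR2DF: the condition at zeros is inherited from `f`.
For totality at a vertex `v` with `g v ≥ 1`: if `f v = 0`, then `v` has a neighbour positive
under `f`; if `f v ≥ 1` and `v ∈ D`, the chosen neighbour of `v` lies in `W`; if `f v ≥ 1` and
`v ∉ D`, a neighbour of `v` in `D` is either positive under `f` or lies in `W`.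
-/

open Finset
open scoped Classical

variable {V : Type*}

theorem statement_6 {V : Type*} [Fintype V] (G : SimpleGraph V)
    (h : ∀ v : V, ∃ u, G.Adj v u) :
    tR2Num G ≤ r2Num G + domNum G := by
  -- The sets defining both invariants are nonempty, so the infima are attained.
  have hR : r2Num G ∈ {k | ∃ f : V → ℕ, IsR2DF G f ∧ (∑ v, f v) = k} :=
    Nat.sInf_mem ⟨_, fun _ => 2, ⟨fun _ => le_rfl, fun _ h0 => absurd h0 (by norm_num)⟩, rfl⟩
  have hD : domNum G ∈
      {k | ∃ S : Finset V, (∀ v : V, v ∉ S → ∃ u ∈ S, G.Adj v u) ∧ S.card = k} :=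
    Nat.sInf_mem ⟨_, Finset.univ, fun v hv => absurd (Finset.mem_univ v) hv, rfl⟩
  obtain ⟨f, ⟨hf2, hf0⟩, hfw⟩ := hR
  obtain ⟨D, hdom, hDc⟩ := hD
  choose w hw using h
  let W : Finset V := D.image (fun v => if f v = 0 then v else w v)
  let g : V → ℕ := fun v => max (f v) (if v ∈ W then 1 else 0)
  have hfg : ∀ v, f v ≤ g v := fun v => le_max_left _ _
  have hWg : ∀ v ∈ W, 1 ≤ g v := fun v hv => by simp [g, hv]
  have hg : IsTR2DF G g := by
    refine ⟨fun v => ?_, fun v hv => ?_, fun v hv => ?_⟩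
    · have := hf2 v
      simp only [g]
      split_ifs <;> omega
    · have hfv : f v = 0 := by have := hfg v; omega
      exact (hf0 v hfv).trans (Finset.sum_le_sum fun u _ => hfg u)
    · by_cases hfv : f v = 0
      · have hpos : ∑ u ∈ Finset.univ.filter (fun u => G.Adj v u), f u ≠ 0 := by
          have := hf0 v hfv
          omega
        obtain ⟨u, hu, hfu⟩ := Finset.exists_ne_zero_of_sum_ne_zero hpos
        exact ⟨u, (Finset.mem_filter.mp hu).2, (Nat.one_le_iff_ne_zero.mpr hfu).trans (hfg u)⟩
      · by_cases hvD : v ∈ D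
        · exact ⟨w v, hw v, hWg _ (Finset.mem_image.mpr ⟨v, hvD, if_neg hfv⟩)⟩
        · obtain ⟨u, huD, huv⟩ := hdom v hvD
          refine ⟨u, huv, ?_⟩
          by_cases hfu : f u = 0
          · exact hWg _ (Finset.mem_image.mpr ⟨u, huD, if_pos hfu⟩)
          · exact (Nat.one_le_iff_ne_zero.mpr hfu).trans (hfg u)
  have hweight : ∑ v, g v ≤ ∑ v, f v + W.card := by
    have hc : W.card = ∑ v, if v ∈ W then 1 else 0 := by simp
    rw [hc, ← Finset.sum_add_distrib]
    exact Finset.sum_le_sum fun v _ => max_le (Nat.le_add_right _ _) (Nat.le_add_left _ _)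
  calc tR2Num G ≤ ∑ v, g v := Nat.sInf_le ⟨g, hg, rfl⟩
    _ ≤ ∑ v, f v + W.card := hweight
    _ ≤ ∑ v, f v + D.card := Nat.add_le_add_left Finset.card_image_le _
    _ = r2Num G + domNum G := by rw [hfw, hDc]
end

section
/- For any finite simple graph G without isolated vertices, γ_{t{R2}}(G) ≤ 2γ_{R2}(G). Furthermore, if γ_{R2}(G) > γ(G), then γ_{t{R2}}(G) ≤ 2γ_{R2}(G) − 1. Here γ_{t{R2}}(G) is the total Roman {2}-domination number, γ_{R2}(G) is the Roman {2}-domination number, and γ(G) is the domination number of G. -/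
/-!
Let `f` be a minimum Roman {2}-dominating function with support `S`. Giving value at least `1` to
one neighbour of each vertex of `S` turns `f` into a total Roman {2}-dominating function, at an
extra cost of at most `|S| ≤ ∑ f` (`tR2Num_le_of_choice`).

One unit can be saved as soon as `S` is nonempty, which `γ(G) < γ_{R2}(G)` guarantees. If `f` takes
the value `2`, then `|S| < ∑ f`. Otherwise take `s ∈ S` and a neighbour `u` of `s`: if `u ∈ S`,
then `s` needs no new neighbour; if `u ∉ S`, then `u` has a second neighbour `t ∈ S`, and `u` serves
both `s` and `t`.
-/

open Finset
open scoped Classical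

variable {V : Type*}

/-- Let `S` be the support of `f`. If every vertex of `S ∪ N` has a neighbour in `S ∪ N`, then raising
`f` to at least `1` on `N` gives a total Roman {2}-dominating function. -/
lemma tR2Num_le_of_dominates {V : Type*} [Fintype V] (G : SimpleGraph V) (f : V → ℕ)
    (hf : IsR2DF G f) (N : Finset V) (hcov : ∀ v, 1 ≤ f v → ∃ u, G.Adj v u ∧ (1 ≤ f u ∨ u ∈ N))
    (hN : ∀ v ∈ N, ∃ u, G.Adj v u ∧ (1 ≤ f u ∨ u ∈ N)) :
    tR2Num G ≤ ∑ v, f v + N.card := by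
  obtain ⟨h2, h0⟩ := hf
  have hle : ∑ v, max (f v) (if v ∈ N then 1 else 0) ≤ ∑ v, f v + N.card := by
    calc ∑ v, max (f v) (if v ∈ N then 1 else 0)
        ≤ ∑ v, (f v + if v ∈ N then 1 else 0) :=
          Finset.sum_le_sum fun v _ => by split_ifs <;> omega
      _ = ∑ v, f v + N.card := by simp [Finset.sum_add_distrib]
  refine le_trans (Nat.sInf_le ⟨fun v => max (f v) (if v ∈ N then 1 else 0), ⟨?_, ?_, ?_⟩, rfl⟩) hle
  · intro v
    have := h2 v
    dsimp only
    split_ifs <;> omega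
  · intro v hv
    have hv0 : f v = 0 := by dsimp only at hv; omega
    exact (h0 v hv0).trans (Finset.sum_le_sum fun u _ => le_max_left _ _)
  · intro v hv
    have hex : ∃ u, G.Adj v u ∧ (1 ≤ f u ∨ u ∈ N) := by
      by_cases hvN : v ∈ N
      · exact hN v hvN
      · exact hcov v (by simpa [hvN] using hv)
    obtain ⟨u, hu, hu'⟩ := hex
    refine ⟨u, hu, ?_⟩
    rcases hu' with hu' | hu'
    · exact le_max_of_le_left hu'
    · simp [hu']

/-- The case of `tR2Num_le_of_dominates` where the added set consists of chosen neighbours `n v` of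
the vertices `v` of a subset `A` of the support; these are dominated by `A` itself. -/
lemma tR2Num_le_of_choice {V : Type*} [Fintype V] (G : SimpleGraph V) (f : V → ℕ)
    (hf : IsR2DF G f) (n : V → V) (hn : ∀ v, G.Adj v (n v)) (A : Finset V)
    (hA : ∀ v ∈ A, 1 ≤ f v)
    (hcov : ∀ v, 1 ≤ f v → v ∉ A → ∃ u, G.Adj v u ∧ (1 ≤ f u ∨ u ∈ A.image n)) :
    tR2Num G ≤ ∑ v, f v + A.card := by
  refine (tR2Num_le_of_dominates G f hf (A.image n) ?_ ?_).trans
    (Nat.add_le_add_left Finset.card_image_le _)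
  · intro v hv
    by_cases hvA : v ∈ A
    · exact ⟨n v, hn v, Or.inr (Finset.mem_image_of_mem n hvA)⟩
    · exact hcov v hv hvA
  · intro v hv
    obtain ⟨w, hw, rfl⟩ := Finset.mem_image.1 hv
    exact ⟨w, (hn w).symm, Or.inl (hA w hw)⟩

theorem statement_7 {V : Type*} [Fintype V] (G : SimpleGraph V)
    (h : ∀ v : V, ∃ u, G.Adj v u) :
    tR2Num G ≤ 2 * r2Num G ∧ (domNum G < r2Num G → tR2Num G ≤ 2 * r2Num G - 1) := by
  have hne : {k | ∃ f : V → ℕ, IsR2DF G f ∧ (∑ v, f v) = k}.Nonempty :=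
    ⟨_, fun _ => 2, ⟨fun _ => le_rfl, fun _ hv => absurd hv (by norm_num)⟩, rfl⟩
  obtain ⟨f, hf, hw⟩ : ∃ f : V → ℕ, IsR2DF G f ∧ (∑ v, f v) = r2Num G := Nat.sInf_mem hne
  choose n hn using h
  set S : Finset V := Finset.univ.filter (fun v => 1 ≤ f v) with hS
  have hSmem : ∀ v, v ∈ S ↔ 1 ≤ f v := fun v => by simp [hS]
  have hScard : S.card = ∑ v, if 1 ≤ f v then 1 else 0 := by simp [hS]
  have hterm : ∀ v ∈ Finset.univ, (if 1 ≤ f v then 1 else 0) ≤ f v := fun v _ => by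
    split_ifs <;> omega
  have hSle : S.card ≤ r2Num G := by
    rw [hScard, ← hw]
    exact Finset.sum_le_sum hterm
  have hbase : tR2Num G ≤ r2Num G + S.card := by
    rw [← hw]
    exact tR2Num_le_of_choice G f hf n hn S (fun v hv => (hSmem v).1 hv)
      (fun v hv hv' => absurd ((hSmem v).2 hv) hv')
  refine ⟨by omega, fun hdom => ?_⟩
  by_cases htwo : ∃ v, f v = 2
  · obtain ⟨v, hv⟩ := htwo
    have hlt : S.card < r2Num G := by
      rw [hScard, ← hw]
      exact Finset.sum_lt_sum hterm ⟨v, Finset.mem_univ v, by simp [hv]⟩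
    omega
  have hone : ∀ v, f v ≤ 1 := fun v => by
    have h1 := hf.1 v
    have h2 : f v ≠ 2 := fun hv => htwo ⟨v, hv⟩
    omega
  -- It suffices to find one support vertex that is served by the neighbours chosen for the others.
  have key : ∀ t (m : V → V), 1 ≤ f t → (∀ v, G.Adj v (m v)) →
      (∃ u, G.Adj t u ∧ (1 ≤ f u ∨ u ∈ (S.erase t).image m)) →
      tR2Num G ≤ 2 * r2Num G - 1 := by
    intro t m ht hm hu
    have htS := (hSmem t).2 ht
    have hle := tR2Num_le_of_choice G f hf m hm (S.erase t)
      (fun v hv => (hSmem v).1 (Finset.mem_of_mem_erase hv)) (fun v hv hv' => by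
        have hvt : v = t := by
          by_contra hne
          exact hv' (Finset.mem_erase.2 ⟨hne, (hSmem v).2 hv⟩)
        exact hvt ▸ hu)
    have hpos := Finset.card_pos.2 ⟨t, htS⟩
    rw [Finset.card_erase_of_mem htS, hw] at hle
    omega
  obtain ⟨s, hs⟩ : ∃ s, 1 ≤ f s := by
    by_contra! hzero
    have : ∑ v, f v = 0 := Finset.sum_eq_zero fun v _ => by have := hzero v; omega
    omega
  by_cases hu : 1 ≤ f (n s)
  · exact key s n hs hn ⟨n s, hn s, Or.inl hu⟩
  · have hsum := hf.2 (n s) (by omega)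
    obtain ⟨t, hts, hadj, ht⟩ : ∃ t, t ≠ s ∧ G.Adj (n s) t ∧ 1 ≤ f t := by
      by_contra! hno
      have hs' : s ∈ Finset.univ.filter (fun u => G.Adj (n s) u) := by simp [(hn s).symm]
      rw [Finset.sum_eq_single_of_mem s hs' fun b hb hbs => by
        have := hno b hbs (Finset.mem_filter.1 hb).2
        omega] at hsum
      have := hone s
      omega
    exact key t n ht hn ⟨n s, hadj.symm, Or.inr
      (Finset.mem_image_of_mem n (Finset.mem_erase.2 ⟨hts.symm, (hSmem s).2 hs⟩))⟩
end

section
/- For any finite simple graph G without isolated vertices, there exists a total Roman {2}-dominating function f on G of minimum weight γ_{t{R2}}(G) such that, writing V_i = {v : f(v) = i} for i ∈ {0,1,2}, either V_2 = ∅ or every vertex v ∈ V_2 has at least two private neighbors in V_0 with respect to the set V_1 ∪ V_2 (i.e., at least two vertices u ∈ V_0 with N(u) ∩ (V_1 ∪ V_2) = {v}). -/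
/-!
Among the minimum-weight total Roman {2}-dominating functions, take `f` with as few vertices of
value `2` as possible, and suppose `f v = 2` while `v` does not have two private neighbors.
A zero vertex adjacent to `v` that is not a private neighbor sees another positive vertex, so it
stays dominated when the value of `v` drops to `1`. If `v` has no private neighbor, lowering `v`
to `1` therefore contradicts minimality of the weight. If `v` has exactly one private neighbor
`u`, lowering `v` to `1` and raising `u` to `1` keeps the weight and removes a vertex of value
`2`, contradicting the second choice. Both modifications are covered by `isTR2DF_lower`.
-/

open Finset
open scoped Classical

variable {V : Type*}

/-- A function agreeing with a TR2DF `f` up to lowering `v` to `1` and raising some zero neighbors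
of `v` to `1` is a TR2DF, as long as every remaining zero vertex adjacent to `v` has another
positive neighbor. -/
lemma isTR2DF_lower {V : Type*} [Fintype V] {G : SimpleGraph V} {f g : V → ℕ}
    (hf : IsTR2DF G f) {v : V} (hgv : g v = 1)
    (hg : ∀ x, x ≠ v → g x = f x ∨ (g x = 1 ∧ f x = 0 ∧ G.Adj x v))
    (hp : ∀ x, g x = 0 → G.Adj x v → ∃ w, G.Adj x w ∧ 1 ≤ f w ∧ w ≠ v) :
    IsTR2DF G g := by
  obtain ⟨h2, h0, h1⟩ := hf
  have hpos : ∀ x, 1 ≤ f x → 1 ≤ g x := by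
    intro x hx
    by_cases hxv : x = v
    · rw [hxv, hgv]
    · rcases hg x hxv with h | h <;> omega
  refine ⟨fun x => ?_, fun x hx => ?_, fun x hx => ?_⟩
  · by_cases hxv : x = v
    · rw [hxv, hgv]; omega
    · have := h2 x
      rcases hg x hxv with h | h <;> omega
  · by_cases hadj : G.Adj x v
    · obtain ⟨w, hw, hfw, hwv⟩ := hp x hx hadj
      have hsub : ({v, w} : Finset V) ⊆ Finset.univ.filter (fun u => G.Adj x u) := by
        intro y hy
        simp only [Finset.mem_insert, Finset.mem_singleton] at hy
        rcases hy with rfl | rfl <;> simpa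
      have hle := Finset.sum_le_sum_of_subset (f := g) hsub
      rw [Finset.sum_pair hwv.symm] at hle
      have := hpos w hfw
      omega
    · have hxv : x ≠ v := by rintro rfl; omega
      have hfx : f x = 0 := by rcases hg x hxv with h | h <;> omega
      refine (h0 x hfx).trans (Finset.sum_le_sum fun u hu => ?_)
      have hu' : G.Adj x u := by simpa using hu
      have huv : u ≠ v := by rintro rfl; exact hadj hu'
      rcases hg u huv with h | h <;> omega
  · have key : 1 ≤ f x → ∃ u, G.Adj x u ∧ 1 ≤ g u := fun hfx => by
      obtain ⟨u, hu, hfu⟩ := h1 x hfx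
      exact ⟨u, hu, hpos u hfu⟩
    by_cases hxv : x = v
    · by_cases hfv : 1 ≤ f x
      · exact key hfv
      · -- If `f v = 0`, the domination condition at `v` supplies a positive neighbor.
        by_contra hcon
        push Not at hcon
        have hs := h0 x (by omega)
        rw [Finset.sum_eq_zero] at hs
        · omega
        · intro u hu
          have hu' : G.Adj x u := by simpa using hu
          have := hcon u hu'
          have := hpos u
          omega
    · rcases hg x hxv with h | ⟨_, _, h⟩
      · exact key (h ▸ hx)
      · exact ⟨v, h, hgv.ge⟩

theorem statement_8 {V : Type*} [Fintype V] (G : SimpleGraph V)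
    (h : ∀ v : V, ∃ u, G.Adj v u) :
    ∃ f : V → ℕ, IsTR2DF G f ∧ (∑ v, f v) = tR2Num G ∧
      ((∀ v, f v ≠ 2) ∨
        (∀ v, f v = 2 → ∃ u₁ u₂ : V, u₁ ≠ u₂ ∧
          (f u₁ = 0 ∧ G.Adj u₁ v ∧ ∀ w, G.Adj u₁ w → 1 ≤ f w → w = v) ∧
          (f u₂ = 0 ∧ G.Adj u₂ v ∧ ∀ w, G.Adj u₂ w → 1 ≤ f w → w = v))) := by
  -- The constant function `1` is a TR2DF, so the infimum defining `tR2Num` is attained.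
  have hne : {k | ∃ f : V → ℕ, IsTR2DF G f ∧ (∑ v, f v) = k}.Nonempty :=
    ⟨_, fun _ => 1, ⟨fun _ => one_le_two, fun _ h0 => absurd h0 one_ne_zero, fun v _ =>
      (h v).imp fun _ hu => ⟨hu, le_rfl⟩⟩, rfl⟩
  have hmin : ∀ g : V → ℕ, IsTR2DF G g → tR2Num G ≤ ∑ v, g v := fun g hg =>
    Nat.sInf_le ⟨g, hg, rfl⟩
  have hne' : {f : V → ℕ | IsTR2DF G f ∧ (∑ v, f v) = tR2Num G}.Nonempty := Nat.sInf_mem hne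
  obtain ⟨f, ⟨hf, hfw⟩, hfmin⟩ := exists_minimalFor_of_wellFoundedLT
    (fun f : V → ℕ => IsTR2DF G f ∧ (∑ v, f v) = tR2Num G)
    (fun f => (Finset.univ.filter (fun v => f v = 2)).card) hne'
  refine ⟨f, hf, hfw, Or.inr fun v hv => ?_⟩
  by_contra hcon
  have hsplit : ∑ x, f x = f v + ∑ x ∈ Finset.univ.erase v, f x :=
    (Finset.add_sum_erase _ _ (Finset.mem_univ v)).symm
  by_cases hex : ∃ u, f u = 0 ∧ G.Adj u v ∧ ∀ w, G.Adj u w → 1 ≤ f w → w = v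
  · obtain ⟨u, hu0, huv, hup⟩ := hex
    have hne : u ≠ v := huv.ne
    have hg : IsTR2DF G (fun x => if x = v ∨ x = u then 1 else f x) := by
      refine isTR2DF_lower hf (v := v) (by simp) (fun x hx => ?_) (fun x hx hxv => ?_)
      · by_cases hxu : x = u
        · subst hxu; right; simp [hu0, huv]
        · left; simp [hx, hxu]
      · by_contra hno
        push Not at hno
        have hx' : ¬ (x = v ∨ x = u) := by
          intro hc; simp [hc] at hx
        have hfx : f x = 0 := by simpa [hx'] using hx
        exact hcon ⟨u, x, fun he => hx' (Or.inr he.symm), ⟨hu0, huv, hup⟩, hfx, hxv, hno⟩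
    have hw : (∑ x, if x = v ∨ x = u then 1 else f x) = tR2Num G := by
      have hu : u ∈ Finset.univ.erase v := by simp [hne]
      rw [← hfw, hsplit, ← Finset.add_sum_erase _ _ hu, hv, hu0,
        ← Finset.add_sum_erase _ _ (Finset.mem_univ v), ← Finset.add_sum_erase _ _ hu]
      have : ∑ x ∈ (Finset.univ.erase v).erase u, (if x = v ∨ x = u then 1 else f x)
          = ∑ x ∈ (Finset.univ.erase v).erase u, f x := by
        refine Finset.sum_congr rfl fun x hx => ?_
        simp only [Finset.mem_erase, Finset.mem_univ, and_true] at hx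
        simp [hx.1, hx.2]
      rw [this]
      simp
      omega
    have hlt : (Finset.univ.filter
        (fun x => (if x = v ∨ x = u then 1 else f x) = 2)).card
        < (Finset.univ.filter (fun x => f x = 2)).card := by
      refine Finset.card_lt_card ((Finset.ssubset_iff_of_subset ?_).2 ⟨v, by simp [hv], by simp⟩)
      intro x hx
      simp only [Finset.mem_filter, Finset.mem_univ, true_and] at hx ⊢
      split_ifs at hx
      · omega
      · exact hx
    exact absurd (hfmin ⟨hg, hw⟩ hlt.le) (not_le.2 hlt)
  · have hg : IsTR2DF G (fun x => if x = v then 1 else f x) := by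
      refine isTR2DF_lower hf (v := v) (by simp) (fun x hx => by simp [hx]) (fun x hx hxv => ?_)
      by_contra hno
      push Not at hno
      have hfx : f x = 0 := by simpa [hxv.ne] using hx
      exact hex ⟨x, hfx, hxv, hno⟩
    have hle := hmin _ hg
    rw [← Finset.add_sum_erase _ _ (Finset.mem_univ v)] at hle
    have : ∑ x ∈ Finset.univ.erase v, (if x = v then 1 else f x)
        = ∑ x ∈ Finset.univ.erase v, f x := by
      refine Finset.sum_congr rfl fun x hx => ?_
      simp [Finset.ne_of_mem_erase hx]
    rw [this] at hle
    simp at hle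
    omega
end

section
/- For the path graph P_n on n ≥ 2 vertices, the total Roman {2}-domination number is γ_{t{R2}}(P_n) = 2⌈n/3⌉ + 1 if n ≡ 0 (mod 3), and γ_{t{R2}}(P_n) = 2⌈n/3⌉ otherwise. -/
/-!
Both cases of the formula equal `⌈(2n + 2) / 3⌉`.

*Lower bound.* A TR2DF `f` has weight at least `2` on every closed neighbourhood. Summing this over
the path counts every value three times, except those of the two end vertices, which are counted
twice; hence `3 w(f) ≥ 2n + f(first) + f(last)`. An end vertex of value `0` has a neighbour of value
`2`, which itself has a positive neighbour, so the closed neighbourhood of that neighbour has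
weight at least `3`. Thus each end of the path contributes an additional `1`, and
`3 w(f) ≥ 2n + 2` (for `n ≤ 3`, where the two contributions could coincide, both ends having value
`0` is impossible). In the formal proof this is an induction on partial sums
(`partial_sum_bound`, `weight_bound`).

*Upper bound.* The labelling `1 1 0 1 1 0 ⋯`, with the last two vertices relabelled `1`, is a TR2DF
of weight `⌊(2n + 4) / 3⌋ = ⌈(2n + 2) / 3⌉` (`pattern`).
-/

open Finset
open scoped Classical

variable {V : Type*}

/-- The neighbourhood sum of a vertex of the path, for a labelling that is the restriction of some
`g : ℕ → ℕ` vanishing outside the path. -/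
lemma path_nbr_sum (n : ℕ) (g : ℕ → ℕ) (hg : ∀ i, n ≤ i → g i = 0) (v : Fin n) :
    ∑ u ∈ Finset.univ.filter (fun u => (SimpleGraph.pathGraph n).Adj v u), g u =
      g (v + 1) + if (v : ℕ) = 0 then 0 else g (v - 1) := by
  have hv := v.2
  simp only [SimpleGraph.pathGraph_adj, Finset.sum_filter]
  rw [Fin.sum_univ_eq_sum_range
    (fun i => if (v : ℕ) + 1 = i ∨ i + 1 = (v : ℕ) then g i else 0) n]
  have hsplit : ∀ i ∈ Finset.range n, (if (v : ℕ) + 1 = i ∨ i + 1 = (v : ℕ) then g i else 0) =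
      (if (v : ℕ) + 1 = i then g i else 0) +
        (if (v : ℕ) - 1 = i then (if (v : ℕ) = 0 then 0 else g i) else 0) := by
    intro i _
    grind
  rw [Finset.sum_congr rfl hsplit, Finset.sum_add_distrib, Finset.sum_ite_eq, Finset.sum_ite_eq]
  have := hg (v + 1)
  grind

/-- Being a TR2DF on the path, in terms of the values of a labelling `g : ℕ → ℕ` vanishing
outside the path. -/
lemma isTR2DF_path_iff (n : ℕ) (g : ℕ → ℕ) (hg : ∀ i, n ≤ i → g i = 0) :
    IsTR2DF (SimpleGraph.pathGraph n) (fun v => g v) ↔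
      (∀ i < n, g i ≤ 2) ∧
      (∀ i < n, g i = 0 → 2 ≤ g (i + 1) + if i = 0 then 0 else g (i - 1)) ∧
      (∀ i < n, 1 ≤ g i → 1 ≤ g (i + 1) + if i = 0 then 0 else g (i - 1)) := by
  unfold IsTR2DF
  simp only [path_nbr_sum n g hg]
  simp only [SimpleGraph.pathGraph_adj, Fin.forall_iff, Fin.exists_iff]
  refine and_congr Iff.rfl (and_congr Iff.rfl (forall₂_congr fun i hi => imp_congr Iff.rfl ?_))
  constructor
  · rintro ⟨j, hj, h | h, hgj⟩
    · subst h; omega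
    · subst h; simp; omega
  · intro h
    by_cases h1 : 1 ≤ g (i + 1)
    · exact ⟨i + 1, by by_contra hc; have := hg (i + 1) (by omega); omega, Or.inl rfl, h1⟩
    · by_cases h0 : i = 0
      · simp only [h0, if_true] at h h1
        omega
      · exact ⟨i - 1, by omega, Or.inr (by omega), by simp only [h0, if_false] at h; omega⟩

section LowerBound

variable {n : ℕ} {g : ℕ → ℕ}

/-- The closed neighbourhood inequalities of the first `k` vertices, summed up; the summand `1` is
the contribution of the left end of the path. -/
lemma partial_sum_bound
    (h2 : ∀ i < n, g i = 0 → 2 ≤ g (i + 1) + if i = 0 then 0 else g (i - 1))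
    (h3 : ∀ i < n, 1 ≤ g i → 1 ≤ g (i + 1) + if i = 0 then 0 else g (i - 1))
    (k : ℕ) (hk : k + 2 ≤ n) :
    2 * (k + 2) + 1 + g (k + 1) ≤ 3 * ∑ i ∈ Finset.range (k + 2), g i + g (k + 2) := by
  induction k with
  | zero =>
    have a0 := h2 0 (by omega)
    have a1 := h2 1 (by omega)
    have b0 := h3 0 (by omega)
    have b1 := h3 1 (by omega)
    simp [Finset.sum_range_succ] at *
    omega
  | succ k ih =>
    have a := h2 (k + 2) (by omega)
    have b := h3 (k + 2) (by omega)
    have := ih (by omega)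
    rw [Finset.sum_range_succ]
    simp at a b
    simp only [show k + 1 + 2 = k + 2 + 1 by omega, show k + 1 + 1 = k + 2 by omega] at *
    omega

lemma weight_bound (hn : 2 ≤ n) (hg : ∀ i, n ≤ i → g i = 0) (h1 : ∀ i < n, g i ≤ 2)
    (h2 : ∀ i < n, g i = 0 → 2 ≤ g (i + 1) + if i = 0 then 0 else g (i - 1))
    (h3 : ∀ i < n, 1 ≤ g i → 1 ≤ g (i + 1) + if i = 0 then 0 else g (i - 1)) :
    2 * n + 2 ≤ 3 * ∑ i ∈ Finset.range n, g i := by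
  obtain ⟨m, rfl⟩ := Nat.exists_eq_add_of_le' hn
  have hz := hg (m + 2) le_rfl
  have hp := partial_sum_bound h2 h3 m le_rfl
  by_cases hl : g (m + 1) = 0
  · -- The last vertex has value `0`, so the last three values are `≥ 1`, `2`, `0`, and the partial sum
    -- bound is applied with these last two vertices removed.
    have a := h2 (m + 1) (by omega) hl
    have b := h1 m (by omega)
    have c := h3 m (by omega)
    simp [hz] at a
    rw [Finset.sum_range_succ, Finset.sum_range_succ]
    match m with
    | 0 => simp at *; omega
    | 1 =>
      simp [Finset.sum_range_succ] at *
      omega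
    | k + 2 =>
      have := partial_sum_bound h2 h3 k (by omega)
      simp at c
      simp only [show k + 2 + 1 = k + 3 by omega] at *
      omega
  · omega

end LowerBound

/-- The labelling `1 1 0 1 1 0 ⋯` of the path on `n` vertices with the last two values replaced
by `1`, extended by `0` beyond the path. -/
def pattern (n i : ℕ) : ℕ := if i < n ∧ ¬(i % 3 = 2 ∧ i + 2 < n) then 1 else 0

lemma sum_pattern (m : ℕ) : ∑ i ∈ Finset.range (m + 2), pattern (m + 2) i = (2 * m + 8) / 3 := by
  have key : ∀ k ≤ m, ∑ i ∈ Finset.range k, pattern (m + 2) i = (2 * k + 2) / 3 := by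
    intro k
    induction k with
    | zero => simp
    | succ k ih =>
      intro hk
      rw [Finset.sum_range_succ, ih (by omega)]
      unfold pattern
      have hr : k % 3 = 0 ∨ k % 3 = 1 ∨ k % 3 = 2 := by omega
      rcases hr with hr | hr | hr <;> split_ifs <;> omega
  rw [Finset.sum_range_succ, Finset.sum_range_succ, key m le_rfl]
  simp [pattern]
  omega

theorem statement_10 (n : ℕ) (hn : 2 ≤ n) :
    tR2Num (SimpleGraph.pathGraph n) =
      if n % 3 = 0 then 2 * ((n + 2) / 3) + 1 else 2 * ((n + 2) / 3) := by
  have hval : (if n % 3 = 0 then 2 * ((n + 2) / 3) + 1 else 2 * ((n + 2) / 3)) =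
      (2 * n + 4) / 3 := by
    have hr : n % 3 = 0 ∨ n % 3 = 1 ∨ n % 3 = 2 := by omega
    rcases hr with hr | hr | hr <;> split_ifs <;> omega
  rw [hval]
  refine IsLeast.csInf_eq ⟨?_, ?_⟩
  · refine ⟨fun v => pattern n v, ?_, ?_⟩
    · rw [isTR2DF_path_iff n (pattern n) (fun i hi => by simp [pattern]; omega)]
      unfold pattern
      refine ⟨?_, ?_, ?_⟩ <;> intro i hi <;> grind
    · rw [Fin.sum_univ_eq_sum_range (pattern n) n]
      obtain ⟨m, rfl⟩ := Nat.exists_eq_add_of_le' hn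
      rw [sum_pattern]
      congr 1
  · rintro k ⟨f, hf, rfl⟩
    let g : ℕ → ℕ := fun i => if h : i < n then f ⟨i, h⟩ else 0
    have hfg : f = fun v : Fin n => g v := by
      funext v
      simp [g]
    have hg : ∀ i, n ≤ i → g i = 0 := fun i hi => by simp [g]; omega
    rw [hfg] at hf ⊢
    obtain ⟨h1, h2, h3⟩ := (isTR2DF_path_iff n g hg).1 hf
    have := weight_bound hn hg h1 h2 h3
    rw [Fin.sum_univ_eq_sum_range g n]
    omega
end

section
/- For any finite simple graph G of order n with minimum degree δ(G) ≥ 2, γ_{t{R2}}(G) ≤ ⌊(γ_t(G) + n)/2⌋, where γ_{t{R2}}(G) is the total Roman {2}-domination number and γ_t(G) is the total domination number of G. -/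
/-!
Let `S` be a minimum total dominating set. For `T ⊇ S`, the indicator function of `T` is a total
Roman {2}-dominating function as soon as every vertex outside `T` has two neighbours in `T`
(`tR2Num_le_card`). Choose `T ⊇ S` of least size with this property. As in Ore's argument for
dominating sets, minimality together with `δ(G) ≥ 2` shows that `S ∪ Tᶜ` has the property as well
(`compl_twoDominates`). Since `|T| + |S ∪ Tᶜ| = |S| + n`, one of the two sets has at most
`(|S| + n) / 2` elements.
-/


open Finset
open scoped Classical

variable {V : Type*}

/-- `T` is 2-dominating: every vertex outside `T` has at least two neighbours in `T`. -/
def TwoDominates {V : Type*} (G : SimpleGraph V) (T : Finset V) : Prop :=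
  ∀ v, v ∉ T → 2 ≤ (T.filter (fun u => G.Adj v u)).card

lemma tR2Num_le_card {V : Type*} [Fintype V] (G : SimpleGraph V) {S T : Finset V}
    (hS : ∀ v : V, ∃ u ∈ S, G.Adj v u) (hST : S ⊆ T) (hT : TwoDominates G T) :
    tR2Num G ≤ T.card := by
  refine Nat.sInf_le ⟨fun v => if v ∈ T then 1 else 0, ⟨?_, ?_, ?_⟩, by simp⟩
  · intro v
    dsimp only
    split_ifs <;> omega
  · intro v hv
    have hvT : v ∉ T := by
      intro h
      simp [h] at hv
    refine (hT v hvT).trans (le_of_eq ?_)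
    rw [Finset.sum_ite_mem, Finset.sum_const, smul_eq_mul, mul_one]
    congr 1
    ext u
    simp [and_comm]
  · intro v _
    obtain ⟨u, hu, huv⟩ := hS v
    exact ⟨u, huv, by simp [hST hu]⟩

/-- If no vertex of `T \ S` can be removed from the 2-dominating superset `T` of `S`, then replacing
`T \ S` by the complement of `T` again gives a 2-dominating set: if
`v ∈ T \ S` had fewer than two neighbours in `S ∪ Tᶜ`, then `T.erase v` would still be
2-dominating. -/
lemma compl_twoDominates {V : Type*} [Fintype V] (G : SimpleGraph V)
    (hδ : ∀ v : V, 2 ≤ G.degree v) {S T : Finset V}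
    (hS : ∀ v : V, ∃ u ∈ S, G.Adj v u) (hST : S ⊆ T) (hT : TwoDominates G T)
    (hmin : ∀ v ∈ T, v ∉ S → ¬ TwoDominates G (T.erase v)) :
    TwoDominates G (S ∪ Tᶜ) := by
  intro v hv
  simp only [mem_union, mem_compl, not_or, not_not] at hv
  obtain ⟨hvS, hvT⟩ := hv
  have key := hmin v hvT hvS
  simp only [TwoDominates, not_forall, not_le] at key
  obtain ⟨u, hu, hcard⟩ := key
  obtain ⟨s, hsS, hvs⟩ := hS v
  by_cases huv : u = v
  -- `v` has at most one neighbour in `T`, namely `s ∈ S`, so all neighbours lie in `S ∪ Tᶜ`.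
  · subst huv
    refine (hδ u).trans ?_
    rw [← SimpleGraph.card_neighborFinset_eq_degree]
    refine Finset.card_le_card fun w hw => ?_
    rw [SimpleGraph.mem_neighborFinset] at hw
    simp only [mem_filter, mem_union, mem_compl]
    refine ⟨?_, hw⟩
    by_cases hwT : w ∈ T
    · left
      have h1 := Finset.card_le_one.mp (Nat.lt_succ_iff.mp hcard) w
        (by simp [hwT, hw, hw.ne']) s (by simp [hST hsS, hvs, hvs.ne'])
      exact h1 ▸ hsS
    · exact Or.inr hwT
  -- `u ∉ T` loses a neighbour when `v` is removed, so `u` and `s` are two neighbours of `v`.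
  · have huT : u ∉ T := fun h => hu (Finset.mem_erase.mpr ⟨huv, h⟩)
    have hadj : G.Adj u v := by
      by_contra hn
      have heq : (T.erase v).filter (fun w => G.Adj u w) = T.filter (fun w => G.Adj u w) := by
        ext w
        simp only [mem_filter, mem_erase]
        constructor
        · rintro ⟨⟨_, h⟩, h'⟩
          exact ⟨h, h'⟩
        · rintro ⟨h, h'⟩
          exact ⟨⟨fun hwv => hn (hwv ▸ h'), h⟩, h'⟩
      rw [heq] at hcard
      exact absurd (hT u huT) (not_le.mpr hcard)
    refine Finset.one_lt_card.mpr ⟨u, ?_, s, ?_, fun h => huT (h ▸ hST hsS)⟩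
    · simp [huT, hadj.symm]
    · simp [hsS, hvs]

theorem statement_12 {V : Type*} [Fintype V] (G : SimpleGraph V)
    (hδ : ∀ v : V, 2 ≤ G.degree v) :
    tR2Num G ≤ (totalDomNum G + Fintype.card V) / 2 := by
  have hne : {k | ∃ S : Finset V, (∀ v : V, ∃ u ∈ S, G.Adj v u) ∧ S.card = k}.Nonempty := by
    refine ⟨_, Finset.univ, fun v => ?_, rfl⟩
    obtain ⟨u, hu⟩ := (G.degree_pos_iff_exists_adj v).mp (by have := hδ v; omega)
    exact ⟨u, Finset.mem_univ u, hu⟩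
  obtain ⟨S, hS, hScard⟩ := Nat.sInf_mem hne
  change S.card = totalDomNum G at hScard
  -- A superset of `S` of least cardinality that is 2-dominating; `univ` shows that one exists.
  obtain ⟨T, hTmem, hTmin⟩ := Finset.exists_min_image
    (Finset.univ.filter fun T : Finset V => S ⊆ T ∧ TwoDominates G T) Finset.card
    ⟨Finset.univ, Finset.mem_filter.mpr ⟨Finset.mem_univ _, Finset.subset_univ S,
      fun v hv => absurd (Finset.mem_univ v) hv⟩⟩
  simp only [mem_filter, mem_univ, true_and] at hTmem hTmin
  obtain ⟨hST, hT⟩ := hTmem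
  have hT' : TwoDominates G (S ∪ Tᶜ) := by
    refine compl_twoDominates G hδ hS hST hT fun v hvT hvS h => ?_
    have h1 := hTmin (T.erase v) ⟨Finset.subset_erase.mpr ⟨hST, hvS⟩, h⟩
    exact absurd (Finset.card_erase_lt_of_mem hvT) (not_lt.mpr h1)
  have h1 := tR2Num_le_card G hS hST hT
  have h2 := tR2Num_le_card G hS Finset.subset_union_left hT'
  have h3 := Finset.card_union_le S Tᶜ
  have h4 := Finset.card_add_card_compl T
  omega
end

section
/- For any finite simple graph G of order n with minimum degree δ(G) ≥ 3, γ_{t{R2}}(G) ≤ 3n/4, where γ_{t{R2}}(G) is the total Roman {2}-domination number of G. -/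
/-!
A set `T` is called *sparse* when every vertex of `T` has two neighbours outside `T` and every
vertex outside `T` has one. The indicator function of the complement of a sparse set is a total
Roman {2}-dominating function, so it suffices to find a sparse set with at least `n / 4` vertices.

Deleting edges only makes sparsity harder, so `G` may be replaced by an edge-minimal spanning
subgraph of minimum degree at least three; then every edge has an endpoint of degree exactly three.
Call a vertex light if its degree is three and heavy otherwise; heavy vertices are pairwise
non-adjacent. Choose a sparse set `T` of light vertices which is inclusion-maximal, and such that
its trace on the light vertices with a heavy neighbour is also maximal
(`exists_light_sparse`). Finally add to `T` a maximal set `R` of heavy vertices without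
neighbours in `T`, keeping the union sparse.

Counting the edges that leave `T` gives `3|T| ≥ |P| + |O₁| + |τ|`, where `P` is the set of vertices
of `T` with a neighbour in `T`, `O₁` is the set of outside vertices with a neighbour in `T`, and
`τ ⊆ O₁` is the set of those which have only one neighbour outside `T` (`edge_count`). The set `O₀`
of outside vertices without neighbours in `T` satisfies `|O₀| ≤ |R| + |τ| + |P|`: by maximality, each
vertex of `O₀` outside `R` is the unique outside neighbour of some vertex of `τ`, or is heavy and is
determined by a vertex of `P` (`light_blocked`, `heavy_blocked`). Adding up,
`n = |T| + |O₁| + |O₀| ≤ 4|T| + |R| ≤ 4|T ∪ R|`.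
-/

open Finset
open scoped Classical

variable {V : Type*}

/-- `T` is sparse in `G`: vertices of `T` have two neighbours outside `T`, the others have at least
one. Equivalently, the complement of `T` is a double dominating set. -/
def Sparse [Fintype V] (G : SimpleGraph V) (T : Finset V) : Prop :=
  (∀ v ∈ T, ∃ a b, a ≠ b ∧ G.Adj v a ∧ G.Adj v b ∧ a ∉ T ∧ b ∉ T) ∧
  (∀ v, v ∉ T → ∃ a, G.Adj v a ∧ a ∉ T)

/-- The outside vertices all of whose neighbours but one lie in `T`. -/
noncomputable def tightSet [Fintype V] (G : SimpleGraph V) (T : Finset V) : Finset V :=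
  univ.filter fun w => w ∉ T ∧ ∃ v, G.Adj w v ∧ v ∉ T ∧ ∀ u, G.Adj w u → u ≠ v → u ∈ T

/-- The vertices of `T` that have a neighbour in `T`. -/
noncomputable def pairedSet [Fintype V] (G : SimpleGraph V) (T : Finset V) : Finset V :=
  univ.filter fun x => x ∈ T ∧ ∃ y ∈ T, G.Adj x y

/-- The vertices outside `T` that have a neighbour in `T`. -/
noncomputable def touchedSet [Fintype V] (G : SimpleGraph V) (T : Finset V) : Finset V :=
  univ.filter fun x => x ∉ T ∧ ∃ y ∈ T, G.Adj x y

/-- The vertices outside `T` that have no neighbour in `T`. -/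
noncomputable def untouchedSet [Fintype V] (G : SimpleGraph V) (T : Finset V) : Finset V :=
  univ.filter fun x => x ∉ T ∧ ∀ y ∈ T, ¬ G.Adj x y

lemma Sparse.subset [Fintype V] {G : SimpleGraph V} {S T : Finset V} (hT : Sparse G T)
    (hST : S ⊆ T) : Sparse G S := by
  have key : ∀ v, ∃ a, G.Adj v a ∧ a ∉ T := by
    intro v
    by_cases hv : v ∈ T
    · obtain ⟨a, b, -, ha, -, haT, -⟩ := hT.1 v hv
      exact ⟨a, ha, haT⟩
    · exact hT.2 v hv
  refine ⟨fun v hv => ?_, fun v _ => ?_⟩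
  · obtain ⟨a, b, hab, ha, hb, haT, hbT⟩ := hT.1 v (hST hv)
    exact ⟨a, b, hab, ha, hb, fun h => haT (hST h), fun h => hbT (hST h)⟩
  · obtain ⟨a, ha, haT⟩ := key v
    exact ⟨a, ha, fun h => haT (hST h)⟩

lemma sparse_empty [Fintype V] {G : SimpleGraph V} (hδ : ∀ v : V, 3 ≤ G.degree v) :
    Sparse G ∅ := by
  refine ⟨by simp, fun v _ => ?_⟩
  have : 0 < G.degree v := by have := hδ v; omega
  obtain ⟨a, ha⟩ := (G.degree_pos_iff_exists_adj v).1 this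
  exact ⟨a, ha, by simp⟩

/-- A neighbour avoiding two prescribed vertices. -/
lemma exists_adj_avoid [Fintype V] {G : SimpleGraph V} (hδ : ∀ v : V, 3 ≤ G.degree v)
    (v p q : V) : ∃ a, G.Adj v a ∧ a ≠ p ∧ a ≠ q := by
  by_contra! h
  have hsub : G.neighborFinset v ⊆ {p, q} := by
    intro a ha
    rw [SimpleGraph.mem_neighborFinset] at ha
    by_cases hp : a = p
    · simp [hp]
    · simp [h a ha hp]
  have h1 := card_le_card hsub
  have h2 : #({p, q} : Finset V) ≤ 2 := card_le_two
  have h3 := hδ v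
  rw [← SimpleGraph.card_neighborFinset_eq_degree] at h3
  omega

lemma exists_two_adj_avoid [Fintype V] {G : SimpleGraph V} (hδ : ∀ v : V, 3 ≤ G.degree v)
    (v p : V) : ∃ a b, a ≠ b ∧ G.Adj v a ∧ G.Adj v b ∧ a ≠ p ∧ b ≠ p := by
  obtain ⟨a, ha, hap, -⟩ := exists_adj_avoid hδ v p p
  obtain ⟨b, hb, hbp, hba⟩ := exists_adj_avoid hδ v p a
  exact ⟨a, b, hba.symm, ha, hb, hap, hbp⟩

lemma light_adj [Fintype V] {G : SimpleGraph V} {v a b c d : V} (h3 : G.degree v = 3)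
    (ha : G.Adj v a) (hb : G.Adj v b) (hc : G.Adj v c) (hd : G.Adj v d)
    (hab : a ≠ b) (hac : a ≠ c) (hbc : b ≠ c) : d = a ∨ d = b ∨ d = c := by
  by_contra! h
  have hsub : ({a, b, c, d} : Finset V) ⊆ G.neighborFinset v := by
    intro x hx
    simp only [mem_insert, mem_singleton] at hx
    rw [SimpleGraph.mem_neighborFinset]
    rcases hx with rfl | rfl | rfl | rfl <;> assumption
  have h1 := card_le_card hsub
  rw [SimpleGraph.card_neighborFinset_eq_degree, h3] at h1
  have h2 : #({a, b, c, d} : Finset V) = 4 := by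
    rw [card_insert_of_notMem, card_insert_of_notMem, card_insert_of_notMem, card_singleton] <;>
      simp [hab, hac, hbc, h.1.symm, h.2.1.symm, h.2.2.symm]
  omega

/-- The ways in which adding a vertex to a sparse set can fail. -/
lemma Sparse.insert_fails [Fintype V] {G : SimpleGraph V} {T : Finset V} {w : V}
    (hT : Sparse G T) (hw : w ∉ T) (h : ¬ Sparse G (insert w T)) :
    (¬ ∃ a b, a ≠ b ∧ G.Adj w a ∧ G.Adj w b ∧ a ∉ T ∧ b ∉ T) ∨
    (∃ t ∈ T, G.Adj w t ∧
      ¬ ∃ a b, a ≠ b ∧ G.Adj t a ∧ G.Adj t b ∧ a ∉ insert w T ∧ b ∉ insert w T) ∨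
    (∃ v, v ∉ T ∧ G.Adj w v ∧ ∀ u, G.Adj v u → u ≠ w → u ∈ T) := by
  by_contra! hc
  obtain ⟨⟨a, b, hab, ha, hb, haT, hbT⟩, h2, h3⟩ := hc
  refine h ⟨fun t ht => ?_, fun v hv => ?_⟩
  · rcases mem_insert.1 ht with rfl | ht
    · exact ⟨a, b, hab, ha, hb, by simp [haT, ha.ne'], by simp [hbT, hb.ne']⟩
    · by_cases hwt : G.Adj w t
      · exact h2 t ht hwt
      · obtain ⟨c, d, hcd, hc, hd, hcT, hdT⟩ := hT.1 t ht
        refine ⟨c, d, hcd, hc, hd, ?_, ?_⟩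
        · simp only [mem_insert, hcT, or_false]; rintro rfl; exact hwt hc.symm
        · simp only [mem_insert, hdT, or_false]; rintro rfl; exact hwt hd.symm
  · simp only [mem_insert, not_or] at hv
    by_cases hwv : G.Adj w v
    · obtain ⟨u, hu, huw, huT⟩ := h3 v hv.2 hwv
      exact ⟨u, hu, by simp [huw, huT]⟩
    · obtain ⟨u, hu, huT⟩ := hT.2 v hv.2
      refine ⟨u, hu, ?_⟩
      simp only [mem_insert, huT, or_false]; rintro rfl; exact hwv hu.symm

/-- An edge-minimal spanning subgraph of minimum degree at least three. -/
lemma exists_edge_minimal [Fintype V] (G : SimpleGraph V) (hδ : ∀ v : V, 3 ≤ G.degree v) :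
    ∃ H : SimpleGraph V, H ≤ G ∧ (∀ v, 3 ≤ H.degree v) ∧
      ∀ u v, H.Adj u v → H.degree u = 3 ∨ H.degree v = 3 := by
  obtain ⟨H, hHG, hmin⟩ := (Set.toFinite {H : SimpleGraph V | ∀ v, 3 ≤ H.degree v}).exists_le_minimal
    (a := G) hδ
  refine ⟨H, hHG, hmin.prop, fun u v huv => ?_⟩
  by_contra! hne
  have hdeg : ∀ x, 3 ≤ H.degree x := hmin.prop
  obtain ⟨K, hK⟩ : ∃ K : SimpleGraph V, ∀ x y, K.Adj x y ↔ H.Adj x y ∧ s(x, y) ≠ s(u, v) :=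
    ⟨H.deleteEdges {s(u, v)}, fun x y => by simp⟩
  have hmem : K ∈ {H : SimpleGraph V | ∀ v, 3 ≤ H.degree v} := by
    intro x
    have hcase : ∀ y, s(x, y) = s(u, v) → 4 ≤ H.degree x → 3 ≤ K.degree x := by
      intro y hy h4
      have hsub : (H.neighborFinset x).erase y ⊆ K.neighborFinset x := by
        intro z hz
        simp only [mem_erase, SimpleGraph.mem_neighborFinset] at hz
        rw [SimpleGraph.mem_neighborFinset, hK, ← hy]
        exact ⟨hz.2, fun h => hz.1 (Sym2.congr_right.1 h)⟩
      have h1 := card_le_card hsub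
      have h2 := pred_card_le_card_erase (s := H.neighborFinset x) (a := y)
      rw [SimpleGraph.card_neighborFinset_eq_degree] at h1 h2
      omega
    by_cases hxu : x = u
    · subst hxu
      exact hcase v rfl (by have := hdeg x; omega)
    by_cases hxv : x = v
    · subst hxv
      exact hcase u Sym2.eq_swap (by have := hdeg x; omega)
    · refine (hdeg x).trans ?_
      rw [← SimpleGraph.card_neighborFinset_eq_degree, ← SimpleGraph.card_neighborFinset_eq_degree]
      refine card_le_card fun z hz => ?_
      rw [SimpleGraph.mem_neighborFinset] at hz ⊢
      rw [hK]
      refine ⟨hz, fun h => ?_⟩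
      rw [Sym2.eq_iff] at h
      tauto
  have hle := hmin.le_of_le hmem (fun x y h => ((hK x y).1 h).1)
  exact ((hK u v).1 (hle huv)).2 rfl

/-- A maximal sparse set of light vertices whose trace on the light vertices with a heavy
neighbour is maximal too. -/
lemma exists_light_sparse [Fintype V] (G : SimpleGraph V) (hδ : ∀ v : V, 3 ≤ G.degree v) :
    ∃ T : Finset V, Sparse G T ∧ (∀ v ∈ T, G.degree v = 3) ∧
      (∀ w, w ∉ T → G.degree w = 3 → ¬ Sparse G (insert w T)) ∧
      (∀ w, w ∉ T → G.degree w = 3 → (∃ h, G.Adj w h ∧ G.degree h ≠ 3) →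
        ¬ Sparse G (insert w (T.filter fun t => ∃ h, G.Adj t h ∧ G.degree h ≠ 3))) := by
  let p : V → Prop := fun t => ∃ h, G.Adj t h ∧ G.degree h ≠ 3
  obtain ⟨A, -, hA⟩ := (Set.toFinite {A : Finset V | Sparse G A ∧ ∀ v ∈ A, G.degree v = 3 ∧ p v}).exists_le_maximal
    (a := ∅) ⟨sparse_empty hδ, by simp⟩
  obtain ⟨T, hAT, hT⟩ := (Set.toFinite {A : Finset V | Sparse G A ∧ ∀ v ∈ A, G.degree v = 3}).exists_le_maximal
    (a := A) ⟨hA.prop.1, fun v hv => (hA.prop.2 v hv).1⟩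
  have hTA : T.filter p = A := by
    refine Eq.symm (hA.eq_of_le ⟨hT.prop.1.subset (filter_subset _ _), fun v hv => ?_⟩ ?_)
    · exact ⟨hT.prop.2 v (mem_filter.1 hv).1, (mem_filter.1 hv).2⟩
    · exact fun v hv => mem_filter.2 ⟨hAT hv, (hA.prop.2 v hv).2⟩
  refine ⟨T, hT.prop.1, hT.prop.2, fun w hw h3 hs => ?_, fun w hw h3 hh hs => ?_⟩
  · refine hw (hT.le_of_ge (y := insert w T) ⟨hs, ?_⟩ (subset_insert _ _) (mem_insert_self _ _))
    intro v hv
    rcases mem_insert.1 hv with rfl | hv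
    exacts [h3, hT.prop.2 v hv]
  · change Sparse G (insert w (T.filter p)) at hs
    rw [hTA] at hs
    refine hw (hAT (hA.le_of_ge (y := insert w A) ⟨hs, ?_⟩ (subset_insert _ _) (mem_insert_self _ _)))
    intro v hv
    rcases mem_insert.1 hv with rfl | hv
    exacts [⟨h3, hh⟩, hA.prop.2 v hv]

/-- Double count of the pairs formed by a vertex of `T` and one of its three neighbours. -/
lemma edge_count [Fintype V] {G : SimpleGraph V} (hδ : ∀ v : V, 3 ≤ G.degree v) {T : Finset V}
    (hL : ∀ v ∈ T, G.degree v = 3) :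
    #(pairedSet G T) + #(touchedSet G T) + #(tightSet G T) ≤ 3 * #T := by
  have h1 : 3 * #T = ∑ u, #{t ∈ T | G.Adj t u} := by
    have := sum_card_bipartiteAbove_eq_sum_card_bipartiteBelow (s := T) (t := univ) G.Adj
    simp only [bipartiteAbove, bipartiteBelow] at this
    rw [← this, mul_comm, ← smul_eq_mul]
    refine (sum_const_nat fun t ht => ?_).symm
    rw [← hL t ht, ← SimpleGraph.card_neighborFinset_eq_degree]
    congr 1
    ext u
    simp
  rw [h1, card_eq_sum_ones, card_eq_sum_ones, card_eq_sum_ones, pairedSet, touchedSet, tightSet,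
    sum_filter, sum_filter, sum_filter, ← sum_add_distrib, ← sum_add_distrib]
  refine sum_le_sum fun u _ => ?_
  have hpos : (∃ y ∈ T, G.Adj u y) → 1 ≤ #{t ∈ T | G.Adj t u} := by
    rintro ⟨y, hy, huy⟩
    exact card_pos.2 ⟨y, mem_filter.2 ⟨hy, huy.symm⟩⟩
  have htwo : (∃ v, G.Adj u v ∧ v ∉ T ∧ ∀ x, G.Adj u x → x ≠ v → x ∈ T) →
      2 ≤ #{t ∈ T | G.Adj t u} := by
    rintro ⟨v, -, -, hv⟩
    obtain ⟨a, b, hab, ha, hb, hav, hbv⟩ := exists_two_adj_avoid hδ u v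
    exact one_lt_card.2 ⟨a, mem_filter.2 ⟨hv a ha hav, ha.symm⟩, b,
      mem_filter.2 ⟨hv b hb hbv, hb.symm⟩, hab⟩
  by_cases huT : u ∈ T
  · simp only [huT, true_and, not_true_eq_false, false_and, if_false, add_zero]
    split_ifs with h
    exacts [hpos h, Nat.zero_le _]
  · simp only [huT, not_false_eq_true, true_and, false_and, if_false, zero_add]
    split_ifs with h h' h'
    exacts [htwo h', hpos h, (by have := htwo h'; omega), Nat.zero_le _]

/-- A vertex without neighbours in `T` that cannot be added to `T` is the only outside neighbour of
some tight vertex. -/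
lemma light_blocked [Fintype V] {G : SimpleGraph V} (hδ : ∀ v : V, 3 ≤ G.degree v) {T : Finset V}
    (hT : Sparse G T) {v : V} (hv : v ∈ untouchedSet G T) (hmax : ¬ Sparse G (insert v T)) :
    ∃ w ∈ tightSet G T, G.Adj w v ∧ v ∉ T := by
  simp only [untouchedSet, mem_filter, mem_univ, true_and] at hv
  rcases hT.insert_fails hv.1 hmax with h | ⟨t, ht, hvt, -⟩ | ⟨w, hw, hvw, h⟩
  · obtain ⟨a, b, hab, ha, hb, -, -⟩ := exists_two_adj_avoid hδ v v
    exact absurd ⟨a, b, hab, ha, hb, fun h => hv.2 a h ha, fun h => hv.2 b h hb⟩ h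
  · exact absurd hvt (hv.2 t ht)
  · refine ⟨w, ?_, hvw.symm, hv.1⟩
    simp only [tightSet, mem_filter, mem_univ, true_and]
    exact ⟨hw, v, hvw.symm, hv.1, h⟩

/-- A heavy vertex `h` without neighbours in `T` that cannot be added to `T ∪ R` is either the only
outside neighbour of a tight vertex, or there is a paired vertex `x` of `T` which has a unique light
neighbour `w` outside `T`, and `h` is the only neighbour of `w` outside `T ∪ R`. -/
lemma heavy_blocked [Fintype V] {G : SimpleGraph V} (hδ : ∀ v : V, 3 ≤ G.degree v)
    (hE : ∀ u v, G.Adj u v → G.degree u = 3 ∨ G.degree v = 3) {T R : Finset V}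
    (hT : Sparse G T)
    (hmax : ∀ w, w ∉ T → G.degree w = 3 → (∃ h, G.Adj w h ∧ G.degree h ≠ 3) →
        ¬ Sparse G (insert w (T.filter fun t => ∃ h, G.Adj t h ∧ G.degree h ≠ 3)))
    (hL : ∀ v ∈ T, G.degree v = 3)
    (hR : ∀ v ∈ R, v ∈ untouchedSet G T ∧ G.degree v ≠ 3) (hTR : Sparse G (T ∪ R))
    {h : V} (hh : h ∈ untouchedSet G T) (hhd : G.degree h ≠ 3) (hhR : h ∉ R)
    (hbl : ¬ Sparse G (insert h (T ∪ R))) :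
    (∃ w ∈ tightSet G T, G.Adj w h ∧ h ∉ T) ∨
    (∃ x ∈ pairedSet G T, ∃ w, G.Adj x w ∧ w ∉ T ∧ G.degree w = 3 ∧
      (∀ z, G.Adj x z → z ∉ T → G.degree z = 3 → z = w) ∧
      G.Adj w h ∧ ∀ u, G.Adj w u → u ≠ h → u ∈ T ∪ R) := by
  simp only [untouchedSet, mem_filter, mem_univ, true_and] at hh hR
  have hlight : ∀ v u, G.degree v ≠ 3 → G.Adj v u → G.degree u = 3 :=
    fun v u hv huv => (hE v u huv).resolve_left hv
  have hheavyN : ∀ v, G.degree v ≠ 3 → (∀ y ∈ T, ¬ G.Adj v y) → ∀ u, G.Adj v u → u ∉ T ∪ R := by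
    intro v hv hvT u hu hmem
    rcases mem_union.1 hmem with hmem | hmem
    · exact hvT u hmem hu
    · exact (hR u hmem).2 (hlight v u hv hu)
  have hhTR : h ∉ T ∪ R := by simp [hh.1, hhR]
  -- The obstruction is an outside neighbour `w` of `h` with no other neighbour outside `T ∪ R`.
  obtain ⟨w, hwTR, hhw, hwN⟩ : ∃ w, w ∉ T ∪ R ∧ G.Adj h w ∧
      ∀ u, G.Adj w u → u ≠ h → u ∈ T ∪ R := by
    rcases hTR.insert_fails hhTR hbl with hf | ⟨t, ht, hht, -⟩ | hf
    · obtain ⟨a, b, hab, ha, hb, -, -⟩ := exists_two_adj_avoid hδ h h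
      exact absurd ⟨a, b, hab, ha, hb, hheavyN h hhd hh.2 a ha, hheavyN h hhd hh.2 b hb⟩ hf
    · exact absurd ht (hheavyN h hhd hh.2 t hht)
    · exact hf
  have hw3 : G.degree w = 3 := hlight h w hhd hhw
  have hwT : w ∉ T := fun hm => hwTR (mem_union_left _ hm)
  by_cases hy : ∃ y ∈ R, G.Adj w y
  swap
  · left
    refine ⟨w, ?_, hhw.symm, hh.1⟩
    simp only [tightSet, mem_filter, mem_univ, true_and]
    refine ⟨hwT, h, hhw.symm, hh.1, fun u hu huh => ?_⟩
    rcases mem_union.1 (hwN u hu huh) with hu' | hu'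
    exacts [hu', absurd ⟨u, hu', hu⟩ hy]
  right
  obtain ⟨y, hyR, hwy⟩ := hy
  have hyh : y ≠ h := by rintro rfl; exact hhR hyR
  set A := T.filter fun t => ∃ h, G.Adj t h ∧ G.degree h ≠ 3 with hA
  have hAT : A ⊆ T := filter_subset _ _
  rcases (hT.subset hAT).insert_fails (fun hm => hwT (hAT hm))
      (hmax w hwT hw3 ⟨h, hhw.symm, hhd⟩) with hf | ⟨x, hxA, hwx, hf⟩ | ⟨v, hvA, hwv, hf⟩
  · exact absurd ⟨y, h, hyh, hwy, hhw.symm, fun hm => (hR y hyR).1.1 (hAT hm),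
      fun hm => hh.1 (hAT hm)⟩ hf
  · have hxT := hAT hxA
    have hx3 := hL x hxT
    obtain ⟨k, hxk, hk3⟩ := (mem_filter.1 hxA).2
    have hkw : k ≠ w := by rintro rfl; exact hk3 hw3
    have hkT : k ∉ T := fun hm => hk3 (hL k hm)
    obtain ⟨x', hxx', hx'w, hx'k⟩ := exists_adj_avoid hδ x w k
    -- The third neighbour of `x` lies in `T`, as otherwise it and `k` would witness sparsity at `x`.
    have hx'A : x' ∈ A := by
      by_contra hx'A
      exact hf ⟨x', k, hx'k, hxx', hxk, by simp [hx'w, hx'A],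
        by simp only [mem_insert, hkw, false_or]; exact fun hm => hkT (hAT hm)⟩
    refine ⟨x, ?_, w, hwx.symm, hwT, hw3, fun z hz hzT hz3 => ?_, hhw.symm, hwN⟩
    · simp only [pairedSet, mem_filter, mem_univ, true_and]
      exact ⟨hxT, x', hAT hx'A, hxx'⟩
    · rcases light_adj hx3 hwx.symm hxk hxx' hz hkw.symm hx'w.symm hx'k.symm with rfl | rfl | rfl
      exacts [rfl, absurd hz3 hk3, absurd (hAT hx'A) hzT]
  · -- A neighbour `v` of `w` with all other neighbours in `A` would violate sparsity of `T` if it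
    -- lies in `T`, and has no neighbour in `T` at all otherwise.
    exfalso
    obtain ⟨a, hva, haw, -⟩ := exists_adj_avoid hδ v w w
    have haT := hAT (hf a hva haw)
    have hvT : v ∈ T := by
      by_cases hvh : v = h
      · subst hvh; exact absurd hva (hh.2 a haT)
      rcases mem_union.1 (hwN v hwv hvh) with hm | hm
      exacts [hm, absurd hva ((hR v hm).1.2 a haT)]
    obtain ⟨c, d, hcd, hc, hd, hcT, hdT⟩ := hT.1 v hvT
    have hcw : c = w := by_contra fun hne => hcT (hAT (hf c hc hne))
    have hdw : d = w := by_contra fun hne => hdT (hAT (hf d hd hne))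
    exact hcd (hcw.trans hdw.symm)

lemma card_le_of_functional {A S : Finset V} (r : V → V → Prop) (h : ∀ v ∈ A, ∃ w ∈ S, r w v)
    (hr : ∀ w v v', v ∈ A → v' ∈ A → r w v → r w v' → v = v') : #A ≤ #S := by
  choose! g hgS hg using h
  exact card_le_card_of_injOn g hgS fun v hv v' hv' heq =>
    hr (g v) v v' hv hv' (hg v hv) (heq ▸ hg v' hv')

lemma exists_large_sparse [Fintype V] {G : SimpleGraph V} (hδ : ∀ v : V, 3 ≤ G.degree v)
    (hE : ∀ u v, G.Adj u v → G.degree u = 3 ∨ G.degree v = 3) :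
    ∃ S : Finset V, Sparse G S ∧ Fintype.card V ≤ 4 * #S := by
  obtain ⟨T, hT, hL, hmax, hmax'⟩ := exists_light_sparse G hδ
  obtain ⟨R, -, hR⟩ := (Set.toFinite {R : Finset V | Sparse G (T ∪ R) ∧
    ∀ v ∈ R, v ∈ untouchedSet G T ∧ G.degree v ≠ 3}).exists_le_maximal
    (a := ∅) ⟨by simpa using hT, by simp⟩
  refine ⟨T ∪ R, hR.prop.1, ?_⟩
  have hdisj : Disjoint T R := by
    rw [disjoint_left]
    intro v hvT hvR
    have := (hR.prop.2 v hvR).1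
    simp only [untouchedSet, mem_filter, mem_univ, true_and] at this
    exact this.1 hvT
  rw [card_union_of_disjoint hdisj]
  have hpart : Fintype.card V = #T + #(touchedSet G T) + #(untouchedSet G T) := by
    have h1 := card_compl_add_card T
    have h2 := card_filter_add_card_filter_not (s := Tᶜ) (fun x => ∃ y ∈ T, G.Adj x y)
    have h3 : Tᶜ.filter (fun x => ∃ y ∈ T, G.Adj x y) = touchedSet G T := by
      ext x; simp [touchedSet]
    have h4 : Tᶜ.filter (fun x => ¬ ∃ y ∈ T, G.Adj x y) = untouchedSet G T := by
      ext x; simp [untouchedSet]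
    rw [h3, h4] at h2
    omega
  let A := univ.filter fun v => ∃ w ∈ tightSet G T, G.Adj w v ∧ v ∉ T
  let B := univ.filter fun h => h ∉ T ∪ R ∧ ∃ x ∈ pairedSet G T, ∃ w, G.Adj x w ∧ w ∉ T ∧
      G.degree w = 3 ∧ (∀ z, G.Adj x z → z ∉ T → G.degree z = 3 → z = w) ∧
      G.Adj w h ∧ ∀ u, G.Adj w u → u ≠ h → u ∈ T ∪ R
  have hcover : untouchedSet G T ⊆ R ∪ (A ∪ B) := by
    intro v hv
    by_cases hvR : v ∈ R
    · exact mem_union_left _ hvR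
    refine mem_union_right _ ?_
    have hvT : v ∉ T := by
      simp only [untouchedSet, mem_filter, mem_univ, true_and] at hv
      exact hv.1
    by_cases hv3 : G.degree v = 3
    · exact mem_union_left _ (mem_filter.2 ⟨mem_univ _, light_blocked hδ hT hv (hmax v hvT hv3)⟩)
    · have hbl : ¬ Sparse G (insert v (T ∪ R)) := by
        intro hs
        refine hvR (hR.le_of_ge (y := insert v R) ⟨by rwa [union_insert], ?_⟩
          (subset_insert _ _) (mem_insert_self _ _))
        intro u hu
        rcases mem_insert.1 hu with rfl | hu
        exacts [⟨hv, hv3⟩, hR.prop.2 u hu]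
      rcases heavy_blocked hδ hE hT hmax' hL hR.prop.2 hR.prop.1 hv hv3 hvR hbl with h | h
      · exact mem_union_left _ (mem_filter.2 ⟨mem_univ _, h⟩)
      · exact mem_union_right _ (mem_filter.2 ⟨mem_univ _, by simp [hvT, hvR], h⟩)
  have hAcard : #A ≤ #(tightSet G T) := by
    refine card_le_of_functional (fun w v => w ∈ tightSet G T ∧ G.Adj w v ∧ v ∉ T)
      (fun v hv => ?_) ?_
    · obtain ⟨w, hw, h⟩ := (mem_filter.1 hv).2
      exact ⟨w, hw, hw, h⟩
    · rintro w v v' - - ⟨hw, hwv, hv⟩ ⟨-, hwv', hv'⟩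
      simp only [tightSet, mem_filter, mem_univ, true_and] at hw
      obtain ⟨-, p, -, -, hp⟩ := hw
      have h1 : v = p := by_contra fun hne => hv (hp v hwv hne)
      have h2 : v' = p := by_contra fun hne => hv' (hp v' hwv' hne)
      exact h1.trans h2.symm
  have hBcard : #B ≤ #(pairedSet G T) := by
    refine card_le_of_functional _ (fun v hv => (mem_filter.1 hv).2.2) ?_
    rintro x v v' - hv' ⟨w, -, -, -, huniq, -, hN⟩ ⟨w', hxw', hw'T, hw'3, -, hw'v', -⟩
    have hww : w' = w := huniq w' hxw' hw'T hw'3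
    subst hww
    by_contra hne
    exact (mem_filter.1 hv').2.1 (hN v' hw'v' (Ne.symm hne))
  have h1 := card_le_card hcover
  have h2 := card_union_le R (A ∪ B)
  have h3 := card_union_le A B
  have h4 := edge_count hδ hL
  omega

theorem statement_13 {V : Type*} [Fintype V] (G : SimpleGraph V)
    (hδ : ∀ v : V, 3 ≤ G.degree v) :
    (tR2Num G : ℝ) ≤ 3 * (Fintype.card V : ℝ) / 4 := by
  obtain ⟨H, hHG, hH, hE⟩ := exists_edge_minimal G hδ
  obtain ⟨S, hS, hcard⟩ := exists_large_sparse hH hE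
  let f : V → ℕ := fun v => if v ∈ S then 0 else 1
  have hf : IsTR2DF G f := by
    refine ⟨fun v => ?_, fun v hv => ?_, fun v hv => ?_⟩
    · simp only [f]; split_ifs <;> omega
    · have hvS : v ∈ S := by by_contra h; simp [f, h] at hv
      obtain ⟨a, b, hab, ha, hb, haS, hbS⟩ := hS.1 v hvS
      have hsub : ({a, b} : Finset V) ⊆ univ.filter (fun u => G.Adj v u) := by
        intro u hu
        simp only [mem_insert, mem_singleton] at hu
        rcases hu with rfl | rfl
        exacts [by simpa using hHG ha, by simpa using hHG hb]
      calc 2 = ∑ u ∈ ({a, b} : Finset V), f u := by rw [sum_pair hab]; simp [f, haS, hbS]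
        _ ≤ _ := sum_le_sum_of_subset hsub
    · have hvS : v ∉ S := by intro h; simp [f, h] at hv
      obtain ⟨a, ha, haS⟩ := hS.2 v hvS
      exact ⟨a, hHG ha, by simp [f, haS]⟩
  have hle : tR2Num G ≤ ∑ v, f v := Nat.sInf_le ⟨f, hf, rfl⟩
  have hsum : ∑ v, f v + #S = Fintype.card V := by
    have h1 : ∑ v, f v = #Sᶜ := by
      rw [card_eq_sum_ones, ← sum_filter_add_sum_filter_not univ (fun v => v ∈ S)]
      have : univ.filter (fun v => v ∉ S) = Sᶜ := by ext; simp
      rw [this, sum_eq_zero (s := univ.filter (fun v => v ∈ S)) (by simp [f]), zero_add]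
      exact sum_congr rfl fun v hv => by simp [f, mem_compl.1 hv]
    rw [h1, card_compl_add_card]
  have hnat : 4 * tR2Num G ≤ 3 * Fintype.card V := by omega
  have : (4 * tR2Num G : ℝ) ≤ 3 * Fintype.card V := by exact_mod_cast hnat
  linarith
end

section
/- Let G be a finite simple graph without isolated vertices. Then γ_{t{R2}}(G) = 2 if and only if G has two universal vertices, where γ_{t{R2}}(G) is the total Roman {2}-domination number of G. -/
/-!
Every TR2DF on a nonempty graph is positive at both ends of some edge `ab`, so its weight is at
least 2 (`IsTR2DF.exists_pos_adj`, `IsTR2DF.two_le_sum`). If the weight is exactly 2, all of it sits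
on `a` and `b`, one unit each; every other vertex has value 0 and needs weight 2 in its
neighborhood, hence is adjacent to both, so `a` and `b` are universal. Conversely, the indicator
function of two universal vertices is a TR2DF of weight 2.
-/

open Finset
open scoped Classical

variable {V : Type*}

theorem IsTR2DF.exists_pos_adj {V : Type*} [Fintype V] [Nonempty V] {G : SimpleGraph V}
    {f : V → ℕ} (hf : IsTR2DF G f) : ∃ a b, G.Adj a b ∧ 1 ≤ f a ∧ 1 ≤ f b := by
  obtain ⟨-, h0, h1⟩ := hf
  have hpos : ∃ a, 1 ≤ f a := by
    by_contra! hc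
    have hz : ∀ a, f a = 0 := fun a => by have := hc a; omega
    have := h0 (Classical.arbitrary V) (hz _)
    simp [hz] at this
  obtain ⟨a, ha⟩ := hpos
  obtain ⟨b, hab, hb⟩ := h1 a ha
  exact ⟨a, b, hab, ha, hb⟩

theorem add_le_sum_of_ne {V : Type*} [Fintype V] (f : V → ℕ) {a b : V} (hab : a ≠ b) :
    f a + f b ≤ ∑ v, f v := by
  rw [← Finset.sum_pair hab]
  exact Finset.sum_le_sum_of_subset (Finset.subset_univ _)

theorem IsTR2DF.two_le_sum {V : Type*} [Fintype V] [Nonempty V] {G : SimpleGraph V}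
    {f : V → ℕ} (hf : IsTR2DF G f) : 2 ≤ ∑ v, f v := by
  obtain ⟨a, b, hab, ha, hb⟩ := hf.exists_pos_adj
  have := add_le_sum_of_ne f hab.ne
  omega

/-- The values at `a` and `b` exhaust the weight 2, so any third vertex has value 0; if it missed
`a`, its neighborhood would carry weight at most 1. -/
theorem IsTR2DF.universal_of_sum_eq_two {V : Type*} [Fintype V] {G : SimpleGraph V}
    {f : V → ℕ} (hf : IsTR2DF G f) (hs : ∑ v, f v = 2) {a b : V} (hab : G.Adj a b)
    (ha : 1 ≤ f a) (hb : 1 ≤ f b) : ∀ w, w ≠ a → G.Adj a w := by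
  intro w hwa
  by_cases hwb : w = b
  · exact hwb ▸ hab
  by_contra hn
  have hw : f w = 0 := by
    have hsum : ∑ v ∈ {w, a, b}, f v ≤ ∑ v, f v :=
      Finset.sum_le_sum_of_subset (Finset.subset_univ _)
    rw [Finset.sum_insert (by simp [hwa, hwb]), Finset.sum_pair hab.ne] at hsum
    omega
  have h2 := hf.2.1 w hw
  have hsum : ∑ v ∈ insert a (Finset.univ.filter (fun u => G.Adj w u)), f v ≤ ∑ v, f v :=
    Finset.sum_le_sum_of_subset (Finset.subset_univ _)
  rw [Finset.sum_insert (by simpa using fun hc : G.Adj w a => hn hc.symm)] at hsum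
  omega

theorem isTR2DF_indicator_pair {V : Type*} [Fintype V] {G : SimpleGraph V} {u v : V}
    (huv : u ≠ v) (hu : ∀ w, w ≠ u → G.Adj u w) (hv : ∀ w, w ≠ v → G.Adj v w) :
    IsTR2DF G (fun w => if w = u ∨ w = v then 1 else 0) := by
  refine ⟨fun w => by dsimp only; split_ifs <;> omega, fun w hw => ?_, fun w hw => ?_⟩
  · have hne : w ≠ u ∧ w ≠ v := by simpa using hw
    have hsub : ({u, v} : Finset V) ⊆ Finset.univ.filter (fun x => G.Adj w x) := by
      intro x hx
      rcases (by simpa using hx : x = u ∨ x = v) with rfl | rfl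
      · simpa using (hu w hne.1).symm
      · simpa using (hv w hne.2).symm
    refine le_trans ?_ (Finset.sum_le_sum_of_subset hsub)
    rw [Finset.sum_pair huv]
    simp
  · have hor : w = u ∨ w = v := by
      by_contra hc
      simp [hc] at hw
    rcases hor with rfl | rfl
    · exact ⟨v, hu v huv.symm, by simp⟩
    · exact ⟨u, hv u huv, by simp⟩

theorem statement_16 {V : Type*} [Fintype V] (G : SimpleGraph V)
    (h : ∀ v : V, ∃ u, G.Adj v u) :
    tR2Num G = 2 ↔
      ∃ u v : V, u ≠ v ∧ (∀ w, w ≠ u → G.Adj u w) ∧ (∀ w, w ≠ v → G.Adj v w) := by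
  constructor
  · intro h2
    have hmem : tR2Num G ∈ {k | ∃ f : V → ℕ, IsTR2DF G f ∧ (∑ v, f v) = k} :=
      Nat.sInf_mem (Nat.nonempty_of_sInf_eq_succ h2)
    obtain ⟨f, hf, hs⟩ := hmem
    rw [h2] at hs
    have : Nonempty V := by
      by_contra hV
      have := not_nonempty_iff.mp hV
      simp at hs
    obtain ⟨a, b, hab, ha, hb⟩ := hf.exists_pos_adj
    exact ⟨a, b, hab.ne, hf.universal_of_sum_eq_two hs hab ha hb,
      hf.universal_of_sum_eq_two hs hab.symm hb ha⟩
  · rintro ⟨u, v, huv, hu, hv⟩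
    have : Nonempty V := ⟨u⟩
    have hmem : 2 ∈ {k | ∃ f : V → ℕ, IsTR2DF G f ∧ (∑ v, f v) = k} := by
      refine ⟨_, isTR2DF_indicator_pair huv hu hv, ?_⟩
      have hset : Finset.univ.filter (fun w => w = u ∨ w = v) = {u, v} := by ext; simp
      rw [Finset.sum_boole, hset, Finset.card_pair huv]
      rfl
    refine le_antisymm (Nat.sInf_le hmem) (le_csInf ⟨2, hmem⟩ ?_)
    rintro k ⟨f, hf, rfl⟩
    exact hf.two_le_sum
end

section
/- Let G be a finite connected simple graph of order n ≥ 2. Then γ_{t{R2}}(G) = n if and only if G is isomorphic to the path P_3, or every vertex of G is either a leaf or a support vertex and every support vertex of G is adjacent to exactly one leaf (i.e., G is the corona H ⊙ N_1 of some connected graph H), where γ_{t{R2}}(G) is the total Roman {2}-domination number of G. -/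
/-!
The constant function `1` is a TR2DF of a connected graph of order at least two, so
`γ_{t{R2}}(G) ≤ n`, with equality exactly when every TR2DF has weight at least `n`
(`tR2Num_eq_card_iff`).

Every leaf `u` with neighbour `v` satisfies `f u + f v ≥ 2` and `f v ≥ 1` for any TR2DF `f`
(`IsTR2DF.leaf`). In a corona, sending each vertex to its partner in the leaf-support
pairing is an injective self-map, hence a permutation, and summing the inequality over all
vertices gives `2 * ∑ f ≥ 2 * n`. For the path on three vertices the same inequality, plus the
fact that the centre needs a neighbour of positive weight, gives weight at least three.

Conversely, a vertex that is neither a leaf nor a support vertex may be given weight `0` and all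
others weight `1`, for total weight `n - 1`. If `v` is adjacent to two leaves and to a further
vertex, weight `2` on `v`, `0` on the two leaves and `1` elsewhere also has total weight `n - 1`.
If `v` has no further neighbour, connectedness forces the graph to be the path on three vertices.
-/

open Finset
open scoped Classical

variable {V : Type*}

theorem exists_adj_of_connected [Fintype V] {G : SimpleGraph V}
    (hconn : G.Connected) (hn : 2 ≤ Fintype.card V) (v : V) : ∃ u, G.Adj v u := by
  have : Nontrivial V := Fintype.one_lt_card_iff_nontrivial.mp hn
  exact hconn.preconnected.exists_adj_of_nontrivial v

theorem isTR2DF_one [Fintype V] {G : SimpleGraph V}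
    (hconn : G.Connected) (hn : 2 ≤ Fintype.card V) : IsTR2DF G (fun _ => 1) :=
  ⟨fun _ => by simp, fun _ h => by simp at h, fun v _ =>
    let ⟨u, hu⟩ := exists_adj_of_connected hconn hn v
    ⟨u, hu, le_rfl⟩⟩

theorem tR2Num_eq_card_iff [Fintype V] {G : SimpleGraph V}
    (hconn : G.Connected) (hn : 2 ≤ Fintype.card V) :
    tR2Num G = Fintype.card V ↔ ∀ f, IsTR2DF G f → Fintype.card V ≤ ∑ v, f v := by
  have hmem : Fintype.card V ∈ {k | ∃ f : V → ℕ, IsTR2DF G f ∧ (∑ v, f v) = k} :=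
    ⟨_, isTR2DF_one hconn hn, by simp⟩
  constructor
  · intro h f hf
    rw [← h]
    exact Nat.sInf_le ⟨f, hf, rfl⟩
  · intro h
    refine le_antisymm (Nat.sInf_le hmem) (le_csInf ⟨_, hmem⟩ ?_)
    rintro k ⟨f, hf, rfl⟩
    exact h f hf

theorem eq_of_degree_one [Fintype V] {G : SimpleGraph V} {u v w : V}
    (h : G.degree u = 1) (hv : G.Adj u v) (hw : G.Adj u w) : v = w :=
  (SimpleGraph.degree_eq_one_iff_existsUnique_adj.mp h).unique hv hw

theorem IsTR2DF.leaf [Fintype V] {G : SimpleGraph V} {f : V → ℕ} (hf : IsTR2DF G f) {u v : V}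
    (h : ∀ w, G.Adj u w → w = v) : 2 ≤ f u + f v ∧ 1 ≤ f v := by
  obtain ⟨-, h0, h1⟩ := hf
  rcases Nat.eq_zero_or_pos (f u) with hu | hu
  · have h2 := h0 u hu
    have hle : ∑ w ∈ Finset.univ.filter (fun w => G.Adj u w), f w ≤ ∑ w ∈ {v}, f w :=
      Finset.sum_le_sum_of_subset (fun w hw => by simpa using h w (by simpa using hw))
    rw [Finset.sum_singleton] at hle
    omega
  · obtain ⟨w, hw, hw1⟩ := h1 u hu
    rw [h w hw] at hw1
    omega

theorem card_le_of_corona [Fintype V] {G : SimpleGraph V}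
    (hconn : G.Connected) (hn : 2 ≤ Fintype.card V)
    (h1 : ∀ v : V, G.degree v = 1 ∨ ∃ u, G.Adj v u ∧ G.degree u = 1)
    (h2 : ∀ v : V, (∃ u, G.Adj v u ∧ G.degree u = 1) → ∃! u, G.Adj v u ∧ G.degree u = 1)
    {f : V → ℕ} (hf : IsTR2DF G f) : Fintype.card V ≤ ∑ v, f v := by
  have hex : ∀ v, ∃ u, G.Adj v u ∧ (G.degree v = 1 ∨ G.degree u = 1) := fun v => by
    rcases h1 v with h | ⟨u, hu, hd⟩
    · obtain ⟨u, hu⟩ := exists_adj_of_connected hconn hn v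
      exact ⟨u, hu, Or.inl h⟩
    · exact ⟨u, hu, Or.inr hd⟩
  choose σ hadj hσ using hex
  have hinj : Function.Injective σ := by
    intro v w hvw
    by_cases hd : G.degree (σ v) = 1
    · exact eq_of_degree_one hd (hadj v).symm (hvw ▸ (hadj w).symm)
    · have hv := (hσ v).resolve_right hd
      have hw := (hσ w).resolve_right (hvw ▸ hd)
      exact (h2 (σ v) ⟨v, (hadj v).symm, hv⟩).unique ⟨(hadj v).symm, hv⟩
        ⟨hvw ▸ (hadj w).symm, hw⟩
  have hbij : Function.Bijective σ := Finite.injective_iff_bijective.mp hinj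
  have hge : ∀ v, 2 ≤ f v + f (σ v) := fun v => by
    rcases hσ v with hd | hd
    · exact (hf.leaf fun w hw => eq_of_degree_one hd hw (hadj v)).1
    · have := (hf.leaf fun w hw => eq_of_degree_one hd hw (hadj v).symm).1
      omega
  have hsum : ∑ _v : V, 2 ≤ ∑ v, (f v + f (σ v)) := Finset.sum_le_sum fun v _ => hge v
  rw [Finset.sum_add_distrib, hbij.sum_comp f] at hsum
  simp at hsum
  omega

theorem card_le_of_path [Fintype V] {G : SimpleGraph V} (e : G ≃g SimpleGraph.pathGraph 3)
    {f : V → ℕ} (hf : IsTR2DF G f) : Fintype.card V ≤ ∑ v, f v := by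
  have hadj : ∀ i j, G.Adj (e.symm i) (e.symm j) ↔ (SimpleGraph.pathGraph 3).Adj i j :=
    fun i j => e.symm.map_adj_iff
  have hsum : ∑ v, f v = f (e.symm 0) + f (e.symm 1) + f (e.symm 2) := by
    rw [← e.symm.toEquiv.sum_comp f, Fin.sum_univ_three]
    rfl
  have hcard : Fintype.card V = 3 := by simpa using Fintype.card_congr e.toEquiv
  have hnbr : ∀ i : Fin 3, i ≠ 1 → ∀ w, G.Adj (e.symm i) w → w = e.symm 1 := by
    intro i hi w hw
    obtain ⟨j, rfl⟩ := e.symm.surjective w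
    rw [hadj, SimpleGraph.pathGraph_adj] at hw
    congr 1
    omega
  have ha := hf.leaf (hnbr 0 (by decide))
  have hb := hf.leaf (hnbr 2 (by decide))
  obtain ⟨w, hw, hw1⟩ := hf.2.2 _ ha.2
  obtain ⟨j, rfl⟩ := e.symm.surjective w
  have hj : j = 0 ∨ j = 2 := by
    rw [hadj, SimpleGraph.pathGraph_adj] at hw
    omega
  rcases hj with rfl | rfl <;> omega

/-- A vertex that is neither a leaf nor a support vertex can be given weight `0`. -/
theorem exists_light_of_not_leaf_not_support [Fintype V] {G : SimpleGraph V}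
    (hconn : G.Connected) (hn : 2 ≤ Fintype.card V) {v : V} (hd : G.degree v ≠ 1)
    (hs : ∀ u, G.Adj v u → G.degree u ≠ 1) :
    ∃ f, IsTR2DF G f ∧ ∑ v, f v < Fintype.card V := by
  have hdeg : 2 ≤ G.degree v := by
    have : 0 < G.degree v :=
      (G.degree_pos_iff_exists_adj v).mpr (exists_adj_of_connected hconn hn v)
    omega
  refine ⟨fun u => if u = v then 0 else 1,
    ⟨fun u => by dsimp only; split_ifs <;> omega, ?_, ?_⟩, ?_⟩
  · intro u hu
    have huv : u = v := by
      by_contra h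
      simp [h] at hu
    subst huv
    have : ∑ w ∈ Finset.univ.filter (fun w => G.Adj u w), (if w = u then 0 else 1)
        = ∑ w ∈ Finset.univ.filter (fun w => G.Adj u w), 1 := by
      refine Finset.sum_congr rfl fun w hw => ?_
      rw [if_neg (Finset.mem_filter.mp hw).2.ne']
    rw [this, Finset.sum_const, smul_eq_mul, mul_one, ← G.neighborFinset_eq_filter,
      G.card_neighborFinset_eq_degree]
    exact hdeg
  · intro u hu
    by_contra! hcon
    have hall : ∀ w, G.Adj u w → w = v := fun w hw => by
      by_contra h
      simpa [h] using hcon w hw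
    obtain ⟨w, hw⟩ := exists_adj_of_connected hconn hn u
    have huv : G.Adj u v := hall w hw ▸ hw
    exact hs u huv.symm (SimpleGraph.degree_eq_one_iff_existsUnique_adj.mpr ⟨v, huv, hall⟩)
  · calc ∑ u, (if u = v then 0 else 1) < ∑ _u : V, 1 :=
          Finset.sum_lt_sum (fun u _ => by split_ifs <;> omega) ⟨v, Finset.mem_univ _, by simp⟩
      _ = Fintype.card V := by simp

/-- Two leaves at a support vertex `v` with a third neighbour can both be given weight `0`, at the
cost of raising the weight of `v` to `2`. -/
theorem exists_light_of_two_leaves [Fintype V] {G : SimpleGraph V}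
    (hconn : G.Connected) (hn : 2 ≤ Fintype.card V) {v a b c : V} (hab : a ≠ b)
    (ha : G.Adj v a) (hda : G.degree a = 1) (hb : G.Adj v b) (hdb : G.degree b = 1)
    (hc : G.Adj v c) (hca : c ≠ a) (hcb : c ≠ b) :
    ∃ f, IsTR2DF G f ∧ ∑ v, f v < Fintype.card V := by
  set f : V → ℕ := fun u => if u = v then 2 else if u = a ∨ u = b then 0 else 1 with hfdef
  have hfv : f v = 2 := by simp [hfdef]
  have hfa : f a = 0 := by simp [hfdef, ha.ne']
  have hfb : f b = 0 := by simp [hfdef, hb.ne']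
  have hf1 : ∀ u, u ≠ a → u ≠ b → 1 ≤ f u := fun u h1 h2 => by
    simp only [hfdef, h1, h2, or_self, if_false]; split_ifs <;> omega
  refine ⟨f, ⟨fun u => by simp only [hfdef]; split_ifs <;> omega, ?_, ?_⟩, ?_⟩
  · intro u hu
    have huv : G.Adj u v := by
      by_cases h1 : u = a
      · exact h1 ▸ ha.symm
      · by_cases h2 : u = b
        · exact h2 ▸ hb.symm
        · have := hf1 u h1 h2
          omega
    rw [← hfv]
    exact Finset.single_le_sum (f := f) (fun _ _ => Nat.zero_le _) (by simpa using huv)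
  · intro u hu
    by_cases huv : u = v
    · exact ⟨c, huv ▸ hc, hf1 c hca hcb⟩
    · obtain ⟨w, hw⟩ := exists_adj_of_connected hconn hn u
      refine ⟨w, hw, hf1 w ?_ ?_⟩
      · rintro rfl
        exact huv (eq_of_degree_one hda hw.symm ha.symm)
      · rintro rfl
        exact huv (eq_of_degree_one hdb hw.symm hb.symm)
  · -- Adding back the two removed units and the extra one at `v` compares `f` with constant `1`.
    have hpt : ∀ u, f u + ((if u = a then 1 else 0) + (if u = b then 1 else 0))
        = 1 + (if u = v then 1 else 0) := by
      intro u
      have h1 := ha.ne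
      have h2 := hb.ne
      simp only [hfdef]
      grind
    have hs := Finset.sum_congr (rfl : (Finset.univ : Finset V) = Finset.univ)
      (fun u _ => hpt u)
    simp only [Finset.sum_add_distrib, Finset.sum_ite_eq', Finset.mem_univ, if_true,
      Finset.sum_const, Finset.card_univ, smul_eq_mul, mul_one] at hs
    omega

theorem iso_path_of_two_leaves [Fintype V] {G : SimpleGraph V}
    (hconn : G.Connected) {v a b : V} (hab : a ≠ b)
    (ha : G.Adj v a) (hda : G.degree a = 1) (hb : G.Adj v b) (hdb : G.degree b = 1)
    (hc : ∀ c, G.Adj v c → c = a ∨ c = b) : Nonempty (G ≃g SimpleGraph.pathGraph 3) := by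
  have hall : ∀ u, u = v ∨ u = a ∨ u = b := by
    intro u
    have hr := (SimpleGraph.reachable_iff_reflTransGen v u).mp (hconn.preconnected v u)
    induction hr with
    | refl => exact Or.inl rfl
    | tail _ hyz ih =>
      rcases ih with rfl | rfl | rfl
      · exact Or.inr (hc _ hyz)
      · exact Or.inl (eq_of_degree_one hda hyz ha.symm)
      · exact Or.inl (eq_of_degree_one hdb hyz hb.symm)
  have hnab : ¬ G.Adj a b := fun h => hb.ne (eq_of_degree_one hda ha.symm h)
  have hbij : Function.Bijective ![a, v, b] := by
    constructor
    · intro i j hij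
      fin_cases i <;> fin_cases j <;> simp_all [ha.ne, ha.ne', hb.ne, hb.ne', hab.symm]
    · intro u
      rcases hall u with rfl | rfl | rfl
      · exact ⟨1, rfl⟩
      · exact ⟨0, rfl⟩
      · exact ⟨2, rfl⟩
  refine ⟨SimpleGraph.Iso.symm ⟨Equiv.ofBijective _ hbij, ?_⟩⟩
  intro i j
  have hnba : ¬ G.Adj b a := fun h => hnab h.symm
  fin_cases i <;> fin_cases j <;>
    simp [SimpleGraph.pathGraph_adj, ha, ha.symm, hb, hb.symm, hnab, hnba]

theorem statement_17 {V : Type*} [Fintype V] (G : SimpleGraph V)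
    (hconn : G.Connected) (hn : 2 ≤ Fintype.card V) :
    tR2Num G = Fintype.card V ↔
      (Nonempty (G ≃g SimpleGraph.pathGraph 3)) ∨
      ((∀ v : V, G.degree v = 1 ∨ ∃ u, G.Adj v u ∧ G.degree u = 1) ∧
       (∀ v : V, (∃ u, G.Adj v u ∧ G.degree u = 1) →
          ∃! u, G.Adj v u ∧ G.degree u = 1)) := by
  rw [tR2Num_eq_card_iff hconn hn]
  constructor
  · intro h
    have hlight : ¬ ∃ f, IsTR2DF G f ∧ ∑ v, f v < Fintype.card V := by
      rintro ⟨f, hf, hlt⟩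
      exact absurd (h f hf) (not_le.mpr hlt)
    refine or_iff_not_imp_left.mpr fun hP => ⟨fun v => ?_, ?_⟩
    · by_contra! hcon
      exact hlight (exists_light_of_not_leaf_not_support hconn hn hcon.1 hcon.2)
    · rintro v ⟨a, ha, hda⟩
      refine ⟨a, ⟨ha, hda⟩, ?_⟩
      rintro b ⟨hb, hdb⟩
      by_contra hba
      refine hP (iso_path_of_two_leaves hconn (Ne.symm hba) ha hda hb hdb fun c hc => ?_)
      by_contra! hcon
      exact hlight (exists_light_of_two_leaves hconn hn (Ne.symm hba) ha hda hb hdb hc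
        hcon.1 hcon.2)
  · rintro (⟨⟨e⟩⟩ | ⟨h1, h2⟩) f hf
    · exact card_le_of_path e hf
    · exact card_le_of_corona hconn hn h1 h2 hf
end

section
/- For any integers r and n with 3 < r < n, there exists a finite simple graph F of order n such that γ_{t{R2}}(F) = r, where γ_{t{R2}}(F) is the total Roman {2}-domination number of F. -/
/-!
The witness is a disjoint union of `s = r / 2` blocks. Block `i < s - 1` is an edge on
`{2i, 2i + 1}`, and the last block consists of the vertices from `c = 2(s - 1)` on. For `r` even the
last block is a clique; for `r` odd it is a star with centre `c` and at least three leaves.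

Every closed neighbourhood carries weight at least `2` under a TR2DF (`two_le_closed`), so every
block does, and a star with at least two leaves carries at least `3` (`block_lower`). Hence every
TR2DF has weight at least `r`. Weight `r` is attained by giving `1` to the first `2s` vertices, and
one more to `c` when `r` is odd.
-/

open Finset
open scoped Classical

variable {V : Type*}

/-- The block containing vertex `v`: the pairs `{2i, 2i + 1}`, with the vertices from `2(s - 1)` on
all put into block `s - 1`. -/
def blk (s v : ℕ) : ℕ := min (v / 2) (s - 1)

/-- The disjoint union of `r / 2` blocks, each a clique, except that for odd `r` the last block is a
star centred at `2 (r / 2 - 1)`. -/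
def blockGraph (r n : ℕ) : SimpleGraph (Fin n) where
  Adj u v := u ≠ v ∧ blk (r / 2) u = blk (r / 2) v ∧
    (r % 2 = 1 → blk (r / 2) u = r / 2 - 1 →
      u.val = 2 * (r / 2 - 1) ∨ v.val = 2 * (r / 2 - 1))
  symm := ⟨fun _ _ h => ⟨h.1.symm, h.2.1.symm, fun h1 h2 => (h.2.2 h1 (h.2.1.trans h2)).symm⟩⟩
  loopless := ⟨fun _ h => h.1 rfl⟩

lemma two_le_closed [Fintype V] {G : SimpleGraph V} {f : V → ℕ} (hf : IsTR2DF G f) (v : V) :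
    2 ≤ f v + ∑ u ∈ univ.filter (fun u => G.Adj v u), f u := by
  obtain ⟨-, h0, h1⟩ := hf
  by_cases hv : f v = 0
  · have := h0 v hv
    omega
  · obtain ⟨u, hu, hfu⟩ := h1 v (by omega)
    have := single_le_sum (f := f) (s := univ.filter (fun u => G.Adj v u))
      (fun _ _ => Nat.zero_le _) (mem_filter.2 ⟨mem_univ u, hu⟩)
    omega

/-- If `v` has no neighbour other than `c`, then weight `0` at `v` forces weight `2` at `c`, and
positive weight at `v` forces positive weight at `c`. -/
lemma leaf_cases [Fintype V] {G : SimpleGraph V} {f : V → ℕ} (hf : IsTR2DF G f) {v c : V}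
    (hv : ∀ u, G.Adj v u → u = c) : (1 ≤ f v ∧ 1 ≤ f c) ∨ 2 ≤ f c := by
  obtain ⟨-, h0, h1⟩ := hf
  by_cases hz : f v = 0
  · right
    refine (h0 v hz).trans ?_
    have hs : univ.filter (fun u => G.Adj v u) ⊆ {c} := fun u hu => by
      simpa using hv u (mem_filter.1 hu).2
    simpa using sum_le_sum_of_subset (f := f) hs
  · obtain ⟨u, hu, hfu⟩ := h1 v (by omega)
    rw [hv u hu] at hfu
    exact Or.inl ⟨by omega, hfu⟩

/-- Each block carries weight at least `2`, and the last one at least `3` when `r` is odd: if the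
centre of the star has weight `1`, no leaf can have weight `0`; if it has weight `2`, it still needs
a neighbour of positive weight. -/
lemma block_lower {r n : ℕ} (hr : 3 < r) (hn : r < n) {f : Fin n → ℕ}
    (hf : IsTR2DF (blockGraph r n) f) {i : ℕ} (hi : i < r / 2) :
    2 + (if i = r / 2 - 1 then r % 2 else 0) ≤
      ∑ v ∈ univ.filter (fun v : Fin n => blk (r / 2) v = i), f v := by
  set B := univ.filter (fun v : Fin n => blk (r / 2) v = i) with hB
  have hc : 2 * i < n := by omega
  set c : Fin n := ⟨2 * i, hc⟩ with hcdef
  have hcB : c ∈ B := by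
    refine mem_filter.2 ⟨mem_univ _, ?_⟩
    simp only [blk, hcdef]
    omega
  have hN : ∀ u, (blockGraph r n).Adj c u → u ∈ B := fun u hu => by
    have h1 := (mem_filter.1 hcB).2
    exact mem_filter.2 ⟨mem_univ _, hu.2.1.symm.trans h1⟩
  have hsplit : f c + ∑ u ∈ B.erase c, f u = ∑ u ∈ B, f u := add_sum_erase _ _ hcB
  have hNe : ∀ u, (blockGraph r n).Adj c u → u ∈ B.erase c := fun u hu =>
    mem_erase.2 ⟨hu.1.symm, hN u hu⟩
  have h2 : 2 ≤ ∑ u ∈ B, f u := by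
    have hs : univ.filter (fun u => (blockGraph r n).Adj c u) ⊆ B.erase c :=
      fun u hu => hNe u (mem_filter.1 hu).2
    have := sum_le_sum_of_subset (f := f) hs
    have := two_le_closed hf c
    omega
  by_cases hodd : i = r / 2 - 1 ∧ r % 2 = 1
  · obtain ⟨hi', ho⟩ := hodd
    -- Every vertex beyond `c` is a leaf of the star.
    have key : ∀ v : Fin n, 2 * i < v.val → v ∈ B.erase c ∧
        ∀ u, (blockGraph r n).Adj v u → u = c := by
      intro v hv
      have hb : blk (r / 2) v = r / 2 - 1 := by simp only [blk]; omega
      refine ⟨mem_erase.2 ⟨fun h => ?_, mem_filter.2 ⟨mem_univ _, hb.trans hi'.symm⟩⟩,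
        fun u hu => ?_⟩
      · rw [h] at hv
        simp [hcdef] at hv
      · apply Fin.ext
        rcases hu.2.2 ho hb with h | h
        · omega
        · simp only [hcdef]; omega
    set a : Fin n := ⟨2 * i + 1, by omega⟩ with ha
    set b : Fin n := ⟨2 * i + 2, by omega⟩ with hb
    obtain ⟨haB, hal⟩ := key a (by simp [ha])
    obtain ⟨hbB, hbl⟩ := key b (by simp [hb])
    have hab : a ≠ b := by simp [ha, hb]
    have hsum : f a + f b ≤ ∑ u ∈ B.erase c, f u := by
      rw [← sum_pair hab]
      exact sum_le_sum_of_subset (by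
        intro x hx
        rcases mem_insert.1 hx with h | h
        · exact h ▸ haB
        · exact (mem_singleton.1 h) ▸ hbB)
    have hla := leaf_cases hf hal
    have hlb := leaf_cases hf hbl
    have hcpos : 1 ≤ f c := by omega
    obtain ⟨u, hu, hfu⟩ := hf.2.2 c hcpos
    have := single_le_sum (f := f) (fun _ _ => Nat.zero_le _) (hNe u hu)
    rw [if_pos hi']
    omega
  · split_ifs <;> omega

lemma exists_weight {r n : ℕ} (hr : 3 < r) (hn : r < n) :
    ∃ f : Fin n → ℕ, IsTR2DF (blockGraph r n) f ∧ ∑ v, f v = r := by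
  set c : Fin n := ⟨2 * (r / 2 - 1), by omega⟩ with hc
  set d : Fin n := ⟨2 * (r / 2 - 1) + 1, by omega⟩ with hd
  set f : Fin n → ℕ := fun v => (if v.val < 2 * (r / 2) then 1 else 0) +
    (if v = c then r % 2 else 0) with hfdef
  have hcd : c ≠ d := by simp [hc, hd]
  have hfc : f c = 1 + r % 2 := by
    simp only [hfdef, if_true]
    rw [if_pos (by simp only [hc]; omega)]
  have hfd : f d = 1 := by
    simp only [hfdef]
    rw [if_neg hcd.symm, if_pos (by simp only [hd]; omega)]
  refine ⟨f, ⟨fun v => ?_, fun v hv => ?_, fun v hv => ?_⟩, ?_⟩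
  · simp only [hfdef]
    split_ifs <;> omega
  · have hv' : 2 * (r / 2) ≤ v.val := by
      by_contra h
      simp only [hfdef] at hv
      rw [if_pos (by omega)] at hv
      omega
    have hac : (blockGraph r n).Adj v c := by
      refine ⟨fun h => ?_, ?_, fun _ _ => Or.inr rfl⟩
      · rw [h] at hv'
        simp only [hc] at hv'
        omega
      · simp only [blk, hc]; omega
    have hcm : c ∈ univ.filter (fun u => (blockGraph r n).Adj v u) :=
      mem_filter.2 ⟨mem_univ _, hac⟩
    rcases Nat.mod_two_eq_zero_or_one r with he | ho
    · have had : (blockGraph r n).Adj v d := by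
        refine ⟨fun h => ?_, ?_, fun h => by omega⟩
        · rw [h] at hv'
          simp only [hd] at hv'
          omega
        · simp only [blk, hd]; omega
      have hsub : ({c, d} : Finset (Fin n)) ⊆ univ.filter (fun u => (blockGraph r n).Adj v u) := by
        intro x hx
        rcases mem_insert.1 hx with h | h
        · exact h ▸ hcm
        · exact (mem_singleton.1 h) ▸ mem_filter.2 ⟨mem_univ _, had⟩
      have := sum_le_sum_of_subset (f := f) hsub
      rw [sum_pair hcd] at this
      omega
    · have := single_le_sum (f := f) (fun _ _ => Nat.zero_le _) hcm
      omega
  · have hv' : v.val < 2 * (r / 2) := by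
      by_contra h
      have hvc : v ≠ c := by
        rintro rfl
        simp only [hc] at h
        omega
      simp only [hfdef] at hv
      rw [if_neg h, if_neg hvc] at hv
      omega
    -- The other vertex of the pair `{2i, 2i + 1}` containing `v`.
    have hm : 4 * (v.val / 2) + 1 - v.val < 2 * (r / 2) := by omega
    refine ⟨⟨4 * (v.val / 2) + 1 - v.val, by omega⟩, ⟨fun h => ?_, ?_, fun _ h => ?_⟩, ?_⟩
    · have := congrArg Fin.val h
      simp only at this
      omega
    · simp only [blk]; omega
    · simp only [blk] at h ⊢; omega
    · simp only [hfdef]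
      rw [if_pos hm]
      omega
  · simp only [hfdef, sum_add_distrib, sum_ite_eq', mem_univ, if_true]
    have : ∑ v : Fin n, (if v.val < 2 * (r / 2) then 1 else 0) = 2 * (r / 2) := by
      rw [sum_boole, Fin.card_filter_val_lt]
      simp
      omega
    omega

theorem statement_18 (r n : ℕ) (hr : 3 < r) (hn : r < n) :
    ∃ G : SimpleGraph (Fin n), tR2Num G = r := by
  refine ⟨blockGraph r n, le_antisymm (Nat.sInf_le (exists_weight hr hn)) ?_⟩
  refine le_csInf ⟨r, exists_weight hr hn⟩ ?_
  rintro k ⟨f, hf, rfl⟩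
  have hmaps : ∀ v ∈ (univ : Finset (Fin n)), blk (r / 2) v ∈ range (r / 2) := fun v _ => by
    simp only [blk, mem_range]; omega
  rw [← sum_fiberwise_of_maps_to hmaps]
  calc r = ∑ i ∈ range (r / 2), (2 + if i = r / 2 - 1 then r % 2 else 0) := by
        rw [sum_add_distrib, sum_ite_eq', if_pos (mem_range.2 (by omega))]
        simp
        omega
    _ ≤ _ := sum_le_sum fun i hi => block_lower hr hn hf (mem_range.1 hi)
end
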